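/- arXiv:1810.06039 — 2 statements merged into one kernel-verified Lean document; each statement's English description precedes it below -/
import Mathlib

section
/- Let 1 < p ≤ 2 and u be a weak solution of ∂_t(|u|^{p-2}u) − div A(x,t,u,Du) = div(|F|^{p-2}F) in Ω_T. Then on any cylinder Q_ρ^{(μ)}(z_o) ⊆ Ω_T with ρ, μ > 0 that is μ-sub-intrinsic with constant K, one has ⨍⨍_{Q_ρ^{(μ)}(z_o)} |u − (u)_{z_o;ρ}^{(μ)}|^p/ρ^p dx dt ≤ c [⨍⨍_{Q_ρ^{(μ)}(z_o)} |u^⟨p/2⟩ − ((u)_{z_o;ρ}^{(μ)})^⟨p/2⟩|^2/(μ^{p−2}ρ^p) dx dt]^{p/2} · [⨍⨍_{Q_ρ^{(μ)}(z_o)} (|Du|^p + |F|^p) dx dt]^{(2−p)/2}, where c = c(p,K). -/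
open MeasureTheory Set Filter
open scoped ENNReal Topology BigOperators

noncomputable section

abbrev Spc (n : ℕ) := EuclideanSpace ℝ (Fin n)
abbrev Vec (N : ℕ) := EuclideanSpace ℝ (Fin N)
abbrev Mat (N n : ℕ) := EuclideanSpace ℝ (Fin N × Fin n)

variable {n N : ℕ}

/-- Spatial partial derivative in direction `j` of a scalar function on space-time. -/
def pderivS (j : Fin n) (f : Spc n × ℝ → ℝ) (z : Spc n × ℝ) : ℝ :=
  fderiv ℝ (fun y => f (y, z.2)) z.1 (EuclideanSpace.single j 1)

/-- Time derivative of a vector-valued function on space-time. -/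
def tderiv (φ : Spc n × ℝ → Vec N) (z : Spc n × ℝ) : Vec N :=
  deriv (fun s => φ (z.1, s)) z.2

/-- Pairing `M · Dφ = ∑_{i,j} M_{ij} ∂_j φ_i` of a matrix field with the spatial gradient of a
test function. -/
def gradPair (M : Spc n × ℝ → Mat N n) (φ : Spc n × ℝ → Vec N) (z : Spc n × ℝ) : ℝ :=
  ∑ i : Fin N, ∑ j : Fin n, M z (i, j) * pderivS j (fun w => φ w i) z

/-- The power `w^⟨α⟩ := |w|^{α-1} w` of a vector. -/
def pw (α : ℝ) (w : Vec N) : Vec N := ‖w‖ ^ (α - 1) • w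

/-- Weak solution of the doubly nonlinear system
`∂_t(|u|^{p-2}u) − div A(x,t,u,Du) = div(|F|^{p-2}F)` in `Ω_T = Ω × (0,T)`. -/
structure WeakSolution (p ν L T : ℝ) (Ω : Set (Spc n))
    (A : Spc n × ℝ → Vec N → Mat N n → Mat N n)
    (F : Spc n × ℝ → Mat N n)
    (u : Spc n × ℝ → Vec N) (Du : Spc n × ℝ → Mat N n) : Prop where
  hn : 1 ≤ n
  hT : 0 < T
  openΩ : IsOpen Ω
  bddΩ : Bornology.IsBounded Ω
  connΩ : IsConnected Ω
  hν : 0 < ν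
  hνL : ν ≤ L
  measA : ∀ (v : Vec N) (ξ : Mat N n), Measurable fun z => A z v ξ
  contA : ∀ᵐ z ∂(volume.restrict (Ω ×ˢ Ioo 0 T)),
    Continuous fun q : Vec N × Mat N n => A z q.1 q.2
  coercivity : ∀ᵐ z ∂(volume.restrict (Ω ×ˢ Ioo 0 T)),
    ∀ (v : Vec N) (ξ : Mat N n), ν * ‖ξ‖ ^ p ≤ (inner ℝ (A z v ξ) ξ : ℝ)
  growth : ∀ᵐ z ∂(volume.restrict (Ω ×ˢ Ioo 0 T)),
    ∀ (v : Vec N) (ξ : Mat N n), ‖A z v ξ‖ ≤ L * ‖ξ‖ ^ (p - 1)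
  measu : Measurable u
  measDu : Measurable Du
  measF : Measurable F
  memLp_u : MemLp u (ENNReal.ofReal p) (volume.restrict (Ω ×ˢ Ioo 0 T))
  memLp_Du : MemLp Du (ENNReal.ofReal p) (volume.restrict (Ω ×ˢ Ioo 0 T))
  memLp_F : MemLp F (ENNReal.ofReal p) (volume.restrict (Ω ×ˢ Ioo 0 T))
  sliceLp : ∀ t ∈ Icc (0:ℝ) T,
    MemLp (fun x => u (x, t)) (ENNReal.ofReal p) (volume.restrict Ω)
  timeCont : ∀ t₀ ∈ Icc (0:ℝ) T,
    Tendsto (fun t => ∫ x in Ω, ‖u (x, t) - u (x, t₀)‖ ^ p) (𝓝[Icc (0:ℝ) T] t₀) (𝓝 0)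
  weakGrad : ∀ ψ : Spc n × ℝ → ℝ, ContDiff ℝ (⊤ : ℕ∞) ψ → HasCompactSupport ψ →
    tsupport ψ ⊆ Ω ×ˢ Ioo 0 T → ∀ (i : Fin N) (j : Fin n),
      ∫ z in Ω ×ˢ Ioo 0 T, u z i * pderivS j ψ z
        = - ∫ z in Ω ×ˢ Ioo 0 T, Du z (i, j) * ψ z
  weakForm : ∀ φ : Spc n × ℝ → Vec N, ContDiff ℝ (⊤ : ℕ∞) φ → HasCompactSupport φ →
    tsupport φ ⊆ Ω ×ˢ Ioo 0 T →
      ∫ z in Ω ×ˢ Ioo 0 T,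
        (‖u z‖ ^ (p - 2) * (inner ℝ (u z) (tderiv φ z) : ℝ)
          - gradPair (fun w => A w (u w) (Du w)) φ z)
        = ∫ z in Ω ×ˢ Ioo 0 T, ‖F z‖ ^ (p - 2) * gradPair F φ z

/-- The scaled parabolic cylinder `Q_ρ^{(μ)}(z₀)`:
`B_ρ(x₀) × (t₀ − μ^{p−2}ρ^p, t₀ + μ^{p−2}ρ^p)` if `p < 2`, and
`B_{μ^{(2−p)/p}ρ}(x₀) × (t₀ − ρ^p, t₀ + ρ^p)` if `p ≥ 2`. -/
def parCyl (p μ ρ : ℝ) (z₀ : Spc n × ℝ) : Set (Spc n × ℝ) :=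
  if p < 2 then
    Metric.ball z₀.1 ρ ×ˢ Ioo (z₀.2 - μ ^ (p - 2) * ρ ^ p) (z₀.2 + μ ^ (p - 2) * ρ ^ p)
  else
    Metric.ball z₀.1 (μ ^ ((2 - p) / p) * ρ) ×ˢ Ioo (z₀.2 - ρ ^ p) (z₀.2 + ρ ^ p)

/-- `Q_ρ^{(μ)}(z₀)` is `μ`-sub-intrinsic with constant `K`:
`⨍⨍ |u|^p/(μ^{2−𝔭}ρ^p) ≤ K μ^p ⨍⨍ (|Du|^p + |F|^p)`, where `𝔭 = max{p,2}`. -/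
def SubIntrinsic (p K μ ρ : ℝ) (z₀ : Spc n × ℝ) (u : Spc n × ℝ → Vec N)
    (Du F : Spc n × ℝ → Mat N n) : Prop :=
  ⨍ z in parCyl p μ ρ z₀, ‖u z‖ ^ p / (μ ^ (2 - max p 2) * ρ ^ p)
    ≤ K * μ ^ p * ⨍ z in parCyl p μ ρ z₀, (‖Du z‖ ^ p + ‖F z‖ ^ p)

/-- `Q_ρ^{(μ)}(z₀)` is `μ`-super-intrinsic with constant `K`:
either `μ^p ⨍⨍ (|Du|^p + |F|^p) ≤ K ⨍⨍ |u|^p/(μ^{2−𝔭}ρ^p)` or `μ^p ≤ K`. -/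
def SuperIntrinsic (p K μ ρ : ℝ) (z₀ : Spc n × ℝ) (u : Spc n × ℝ → Vec N)
    (Du F : Spc n × ℝ → Mat N n) : Prop :=
  (μ ^ p * ⨍ z in parCyl p μ ρ z₀, (‖Du z‖ ^ p + ‖F z‖ ^ p)
      ≤ K * ⨍ z in parCyl p μ ρ z₀, ‖u z‖ ^ p / (μ ^ (2 - max p 2) * ρ ^ p))
    ∨ μ ^ p ≤ K

theorem norm_sub_le_norm_pw_sub_of_norm_le {N : ℕ} {α : ℝ} (hα : 1 / 2 ≤ α) (hα1 : α ≤ 1)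
    {a b : Vec N} (hab : ‖b‖ ≤ ‖a‖) :
    ‖a - b‖ ≤ 2 * ‖a‖ ^ (1 - α) * ‖pw α a - pw α b‖ := by
  rcases eq_or_ne a 0 with rfl | ha
  · have hb : b = 0 := by simpa using hab
    simp [hb]
  have hr : 0 < ‖a‖ := norm_pos_iff.2 ha
  have norm_pw (w : Vec N) : ‖pw α w‖ = ‖w‖ ^ α := by
    rcases eq_or_ne w 0 with rfl | hw
    · simp [pw, Real.zero_rpow (show α ≠ 0 by linarith)]
    · have hw' : 0 < ‖w‖ := norm_pos_iff.2 hw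
      rw [pw, norm_smul, Real.norm_of_nonneg (by positivity)]
      nth_rewrite 2 [← Real.rpow_one ‖w‖]
      rw [← Real.rpow_add hw', sub_add_cancel]
  have smul_pw (w : Vec N) : ‖w‖ ^ (1 - α) • pw α w = w := by
    rcases eq_or_ne w 0 with rfl | hw
    · simp [pw]
    · rw [pw, smul_smul, ← Real.rpow_add (norm_pos_iff.2 hw)]
      simp
  have hsplit : a - b = ‖a‖ ^ (1 - α) • (pw α a - pw α b)
      + (‖a‖ ^ (1 - α) - ‖b‖ ^ (1 - α)) • pw α b := by
    rw [smul_sub, sub_smul, smul_pw, smul_pw]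
    abel
  have hmono : ‖b‖ ^ (1 - α) ≤ ‖a‖ ^ (1 - α) :=
    Real.rpow_le_rpow (norm_nonneg _) hab (by linarith)
  have hgm : ‖a‖ ^ (1 - α) * ‖b‖ ^ α ≤ (1 - α) * ‖a‖ + α * ‖b‖ :=
    Real.geom_mean_le_arith_mean2_weighted (by linarith) (by linarith) (norm_nonneg _)
      (norm_nonneg _) (by ring)
  have norm_rpow_mul (w : Vec N) : ‖w‖ ^ (1 - α) * ‖w‖ ^ α = ‖w‖ := by
    rw [← norm_pw, ← Real.norm_of_nonneg (Real.rpow_nonneg (norm_nonneg w) (1 - α)),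
      ← norm_smul, smul_pw]
  have hsecond : (‖a‖ ^ (1 - α) - ‖b‖ ^ (1 - α)) * ‖b‖ ^ α
      ≤ ‖a‖ ^ (1 - α) * ‖pw α a - pw α b‖ := by
    have htri : ‖a‖ ^ α - ‖b‖ ^ α ≤ ‖pw α a - pw α b‖ := by
      rw [← norm_pw, ← norm_pw]
      exact norm_sub_norm_le _ _
    refine le_trans ?_ (mul_le_mul_of_nonneg_left htri (by positivity))
    rw [sub_mul, mul_sub, norm_rpow_mul, norm_rpow_mul]
    nlinarith
  calc ‖a - b‖ ≤ ‖a‖ ^ (1 - α) * ‖pw α a - pw α b‖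
        + (‖a‖ ^ (1 - α) - ‖b‖ ^ (1 - α)) * ‖b‖ ^ α := by
        conv_lhs => rw [hsplit]
        refine (norm_add_le _ _).trans_eq ?_
        rw [norm_smul, norm_smul, norm_pw, Real.norm_of_nonneg (by positivity),
          Real.norm_of_nonneg (sub_nonneg.2 hmono)]
    _ ≤ 2 * ‖a‖ ^ (1 - α) * ‖pw α a - pw α b‖ := by linarith

theorem norm_sub_le_max_rpow_mul_norm_pw_sub {N : ℕ} {α : ℝ} (hα : 1 / 2 ≤ α) (hα1 : α ≤ 1)
    (a b : Vec N) :
    ‖a - b‖ ≤ 2 * max ‖a‖ ‖b‖ ^ (1 - α) * ‖pw α a - pw α b‖ := by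
  rcases le_total ‖b‖ ‖a‖ with h | h
  · rw [max_eq_left h]
    exact norm_sub_le_norm_pw_sub_of_norm_le hα hα1 h
  · rw [max_eq_right h, norm_sub_rev, norm_sub_rev (pw α a)]
    exact norm_sub_le_norm_pw_sub_of_norm_le hα hα1 h

theorem norm_sub_rpow_le_norm_pw_sub {N : ℕ} {p : ℝ} (hp : 1 < p) (hp2 : p ≤ 2) (a b : Vec N) :
    ‖a - b‖ ^ p ≤ 2 ^ p * ((‖pw (p / 2) a - pw (p / 2) b‖ ^ 2) ^ (p / 2)
      * (‖a‖ ^ p + ‖b‖ ^ p) ^ (1 - p / 2)) := by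
  have hmax : 0 ≤ max ‖a‖ ‖b‖ := le_max_of_le_left (norm_nonneg a)
  have hmaxp : max ‖a‖ ‖b‖ ^ p ≤ ‖a‖ ^ p + ‖b‖ ^ p := by
    have ha : 0 ≤ ‖a‖ ^ p := by positivity
    have hb : 0 ≤ ‖b‖ ^ p := by positivity
    rcases max_choice ‖a‖ ‖b‖ with h | h <;> rw [h] <;> linarith
  have hsq : (‖pw (p / 2) a - pw (p / 2) b‖ ^ 2) ^ (p / 2)
      = ‖pw (p / 2) a - pw (p / 2) b‖ ^ p := by
    rw [← Real.rpow_natCast, ← Real.rpow_mul (norm_nonneg _)]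
    congr 1
    push_cast
    ring
  calc ‖a - b‖ ^ p
      ≤ (2 * max ‖a‖ ‖b‖ ^ (1 - p / 2) * ‖pw (p / 2) a - pw (p / 2) b‖) ^ p :=
        Real.rpow_le_rpow (norm_nonneg _)
          (norm_sub_le_max_rpow_mul_norm_pw_sub (by linarith) (by linarith) a b) (by linarith)
    _ = 2 ^ p * (‖pw (p / 2) a - pw (p / 2) b‖ ^ p * (max ‖a‖ ‖b‖ ^ p) ^ (1 - p / 2)) := by
        rw [Real.mul_rpow (by positivity) (norm_nonneg _), Real.mul_rpow two_pos.le (by positivity),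
          ← Real.rpow_mul hmax, ← Real.rpow_mul hmax, mul_comm (1 - p / 2)]
        ring
    _ ≤ _ := by
        rw [hsq]
        have := Real.rpow_le_rpow (by positivity) hmaxp (show 0 ≤ 1 - p / 2 by linarith)
        gcongr

theorem integral_rpow_mul_rpow_one_sub_le {α : Type*} [MeasurableSpace α] {P : Measure α}
    {f g : α → ℝ} (hf : Integrable f P) (hg : Integrable g P) (hf0 : ∀ x, 0 ≤ f x)
    (hg0 : ∀ x, 0 ≤ g x) {θ : ℝ} (hθ : 0 ≤ θ) (hθ1 : θ ≤ 1) :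
    Integrable (fun x => f x ^ θ * g x ^ (1 - θ)) P ∧
      ∫ x, f x ^ θ * g x ^ (1 - θ) ∂P ≤ (∫ x, f x ∂P) ^ θ * (∫ x, g x ∂P) ^ (1 - θ) := by
  have hmeas : AEStronglyMeasurable (fun x => f x ^ θ * g x ^ (1 - θ)) P :=
    ((hf.aemeasurable.pow_const θ).mul (hg.aemeasurable.pow_const (1 - θ))).aestronglyMeasurable
  have hlin : ∫⁻ x, ENNReal.ofReal (f x ^ θ * g x ^ (1 - θ)) ∂P
      ≤ ENNReal.ofReal ((∫ x, f x ∂P) ^ θ * (∫ x, g x ∂P) ^ (1 - θ)) := by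
    rw [ENNReal.ofReal_mul (Real.rpow_nonneg (integral_nonneg hf0) _),
      ← ENNReal.ofReal_rpow_of_nonneg (integral_nonneg hf0) hθ,
      ← ENNReal.ofReal_rpow_of_nonneg (integral_nonneg hg0) (sub_nonneg.2 hθ1),
      ofReal_integral_eq_lintegral_ofReal hf (ae_of_all _ hf0),
      ofReal_integral_eq_lintegral_ofReal hg (ae_of_all _ hg0)]
    refine le_trans (le_of_eq (lintegral_congr fun x => ?_))
      (ENNReal.lintegral_mul_norm_pow_le hf.aemeasurable.ennreal_ofReal
        hg.aemeasurable.ennreal_ofReal hθ (sub_nonneg.2 hθ1) (by ring))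
    rw [ENNReal.ofReal_mul (Real.rpow_nonneg (hf0 x) _),
      ← ENNReal.ofReal_rpow_of_nonneg (hf0 x) hθ,
      ← ENNReal.ofReal_rpow_of_nonneg (hg0 x) (sub_nonneg.2 hθ1)]
  have hnonneg (x : α) : 0 ≤ f x ^ θ * g x ^ (1 - θ) :=
    mul_nonneg (Real.rpow_nonneg (hf0 x) _) (Real.rpow_nonneg (hg0 x) _)
  refine ⟨⟨hmeas, ?_⟩, ?_⟩
  · rw [hasFiniteIntegral_iff_ofReal (ae_of_all _ hnonneg)]
    exact hlin.trans_lt ENNReal.ofReal_lt_top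
  · rw [integral_eq_lintegral_of_nonneg_ae (ae_of_all _ hnonneg) hmeas]
    exact ENNReal.toReal_le_of_le_ofReal (mul_nonneg (Real.rpow_nonneg (integral_nonneg hf0) _)
      (Real.rpow_nonneg (integral_nonneg hg0) _)) hlin

theorem norm_integral_rpow_le {α : Type*} [MeasurableSpace α] {P : Measure α}
    [IsProbabilityMeasure P] {N : ℕ} {p : ℝ} (hp : 1 < p) {u : α → Vec N}
    (hu : Integrable (fun x => ‖u x‖ ^ p) P) :
    ‖∫ x, u x ∂P‖ ^ p ≤ ∫ x, ‖u x‖ ^ p ∂P := by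
  have hp0 : 0 < p := by linarith
  have hnonneg : 0 ≤ ∫ x, ‖u x‖ ^ p ∂P := integral_nonneg fun x => by positivity
  have h := (integral_rpow_mul_rpow_one_sub_le hu (integrable_const (1 : ℝ))
    (fun x => by positivity) (fun _ => zero_le_one) (θ := p⁻¹) (by positivity)
    (inv_le_one_of_one_le₀ hp.le)).2
  simp only [Real.one_rpow, mul_one, integral_const, probReal_univ, smul_eq_mul,
    Real.rpow_rpow_inv (norm_nonneg _) hp0.ne'] at h
  calc ‖∫ x, u x ∂P‖ ^ p ≤ ((∫ x, ‖u x‖ ^ p ∂P) ^ p⁻¹) ^ p :=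
        Real.rpow_le_rpow (norm_nonneg _) ((norm_integral_le_integral_norm _).trans h) hp0.le
    _ = ∫ x, ‖u x‖ ^ p ∂P := Real.rpow_inv_rpow hnonneg hp0.ne'

theorem integrable_sq_norm_pw_sub {α : Type*} [MeasurableSpace α] {P : Measure α}
    [IsFiniteMeasure P] {N : ℕ} {p : ℝ} (hp : 0 < p) {u : α → Vec N} (hum : Measurable u)
    (hu : Integrable (fun x => ‖u x‖ ^ p) P) (a : Vec N) :
    Integrable (fun x => ‖pw (p / 2) (u x) - a‖ ^ 2) P := by
  have hm : AEStronglyMeasurable (fun x => pw (p / 2) (u x)) P :=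
    ((hum.norm.pow_const (p / 2 - 1)).smul hum).aestronglyMeasurable
  have hpw : MemLp (fun x => pw (p / 2) (u x)) 2 P := by
    rw [memLp_two_iff_integrable_sq_norm hm]
    refine hu.congr (ae_of_all _ fun x => ?_)
    rcases eq_or_ne (u x) 0 with h | h
    · simp [h, pw, Real.zero_rpow hp.ne']
    · have hx : 0 < ‖u x‖ := norm_pos_iff.2 h
      simp only [pw, norm_smul]
      rw [Real.norm_of_nonneg (by positivity), mul_pow, ← Real.rpow_natCast,
        ← Real.rpow_natCast, ← Real.rpow_mul hx.le, ← Real.rpow_add hx]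
      congr 1
      push_cast
      ring
  have hsub : MemLp (fun x => pw (p / 2) (u x) - a) 2 P := hpw.sub (memLp_const a)
  exact (memLp_two_iff_integrable_sq_norm hsub.1).1 hsub

/-- Comparison of the `p`-oscillation of `u` around its mean with the quadratic oscillation of
`u^⟨p/2⟩` on a probability space. -/
theorem integral_norm_sub_mean_rpow_le {α : Type*} [MeasurableSpace α] {P : Measure α}
    [IsProbabilityMeasure P] {N : ℕ} {p : ℝ} (hp : 1 < p) (hp2 : p ≤ 2) {u : α → Vec N}
    (hum : Measurable u) (hu : Integrable (fun x => ‖u x‖ ^ p) P) :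
    ∫ x, ‖u x - ∫ y, u y ∂P‖ ^ p ∂P
      ≤ 2 ^ p * ((∫ x, ‖pw (p / 2) (u x) - pw (p / 2) (∫ y, u y ∂P)‖ ^ 2 ∂P) ^ (p / 2)
        * (2 * ∫ x, ‖u x‖ ^ p ∂P) ^ (1 - p / 2)) := by
  set a := ∫ y, u y ∂P
  have hg : Integrable (fun x => ‖u x‖ ^ p + ‖a‖ ^ p) P := hu.add (integrable_const _)
  obtain ⟨hint, hholder⟩ := integral_rpow_mul_rpow_one_sub_le
    (integrable_sq_norm_pw_sub (by linarith) hum hu (pw (p / 2) a)) hg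
    (fun x => by positivity) (fun x => by positivity) (θ := p / 2) (by linarith) (by linarith)
  have hmean : ∫ x, (‖u x‖ ^ p + ‖a‖ ^ p) ∂P ≤ 2 * ∫ x, ‖u x‖ ^ p ∂P := by
    rw [integral_add hu (integrable_const _), integral_const, probReal_univ, one_smul, two_mul]
    gcongr
    exact norm_integral_rpow_le hp hu
  calc ∫ x, ‖u x - a‖ ^ p ∂P
      ≤ ∫ x, 2 ^ p * ((‖pw (p / 2) (u x) - pw (p / 2) a‖ ^ 2) ^ (p / 2)
          * (‖u x‖ ^ p + ‖a‖ ^ p) ^ (1 - p / 2)) ∂P :=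
        integral_mono_of_nonneg (ae_of_all _ fun x => by positivity) (hint.const_mul _)
          (ae_of_all _ fun x => norm_sub_rpow_le_norm_pw_sub hp hp2 (u x) a)
    _ ≤ _ := by
        rw [integral_const_mul]
        refine mul_le_mul_of_nonneg_left (hholder.trans ?_) (by positivity)
        refine mul_le_mul_of_nonneg_left (Real.rpow_le_rpow ?_ hmean (by linarith)) ?_
        · exact integral_nonneg fun x => by positivity
        · exact Real.rpow_nonneg (integral_nonneg fun x => by positivity) _

theorem isOpen_parCyl {n : ℕ} (p μ ρ : ℝ) (z₀ : Spc n × ℝ) : IsOpen (parCyl p μ ρ z₀) := by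
  unfold parCyl
  split_ifs <;> exact Metric.isOpen_ball.prod isOpen_Ioo

theorem mem_parCyl_self {n : ℕ} {p μ ρ : ℝ} (hμ : 0 < μ) (hρ : 0 < ρ) (z₀ : Spc n × ℝ) :
    z₀ ∈ parCyl p μ ρ z₀ := by
  have h₁ : 0 < ρ ^ p := by positivity
  have h₂ : 0 < μ ^ (p - 2) * ρ ^ p := by positivity
  have h₃ : 0 < μ ^ ((2 - p) / p) * ρ := by positivity
  unfold parCyl
  split_ifs <;> simp_all

/-- Let `1 < p ≤ 2` and `u` a weak solution. On any `μ`-sub-intrinsic cylinder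
`Q_ρ^{(μ)}(z₀) ⊆ Ω_T` one has
`⨍⨍ |u − (u)|^p/ρ^p ≤ c (⨍⨍ |u^⟨p/2⟩ − ((u))^⟨p/2⟩|²/(μ^{p−2}ρ^p))^{p/2}
(⨍⨍ (|Du|^p + |F|^p))^{(2−p)/2}` with `c = c(p, K)`. -/
theorem subquadratic_comparison (p K : ℝ) (hp : 1 < p) (hp2 : p ≤ 2) (hK : 1 ≤ K) :
    ∃ c > 0, ∀ (n N : ℕ) (ν L T : ℝ) (Ω : Set (Spc n))
      (A : Spc n × ℝ → Vec N → Mat N n → Mat N n) (F : Spc n × ℝ → Mat N n)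
      (u : Spc n × ℝ → Vec N) (Du : Spc n × ℝ → Mat N n),
      WeakSolution p ν L T Ω A F u Du →
      ∀ (z₀ : Spc n × ℝ) (ρ μ : ℝ), 0 < ρ → 0 < μ →
        parCyl p μ ρ z₀ ⊆ Ω ×ˢ Ioo 0 T →
        SubIntrinsic p K μ ρ z₀ u Du F →
        ⨍ z in parCyl p μ ρ z₀, ‖u z - ⨍ w in parCyl p μ ρ z₀, u w‖ ^ p / ρ ^ p
          ≤ c * (⨍ z in parCyl p μ ρ z₀,
                  ‖pw (p / 2) (u z) - pw (p / 2) (⨍ w in parCyl p μ ρ z₀, u w)‖ ^ 2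
                    / (μ ^ (p - 2) * ρ ^ p)) ^ (p / 2)
              * (⨍ z in parCyl p μ ρ z₀, (‖Du z‖ ^ p + ‖F z‖ ^ p)) ^ ((2 - p) / 2) := by
  have hp0 : 0 < p := by linarith
  refine ⟨2 ^ p * (2 * K) ^ (1 - p / 2), by positivity, ?_⟩
  intro n N ν L T Ω A F u Du hsol z₀ ρ μ hρ hμ hsub hsi
  set Q := parCyl p μ ρ z₀
  have hvol0 : volume Q ≠ 0 :=
    ((isOpen_parCyl p μ ρ z₀).measure_pos volume ⟨z₀, mem_parCyl_self hμ hρ z₀⟩).ne'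
  have hvoltop : volume Q ≠ ∞ := ((measure_mono hsub).trans_lt
    ((hsol.bddΩ.prod (Metric.isBounded_Ioo 0 T)).measure_lt_top)).ne
  have : NeZero (volume.restrict Q) := ⟨by simpa using hvol0⟩
  have : IsFiniteMeasure (volume.restrict Q) := ⟨by simpa using hvoltop.lt_top⟩
  have hu : Integrable (fun z => ‖u z‖ ^ p) (((volume.restrict Q) univ)⁻¹ • volume.restrict Q) := by
    refine Integrable.smul_measure ?_ (by simpa using hvol0)
    have h := (hsol.memLp_u.mono_measure (Measure.restrict_mono hsub le_rfl)).integrable_norm_rpow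
      (by simpa using hp0) ENNReal.ofReal_ne_top
    simpa [ENNReal.toReal_ofReal hp0.le] using h
  have hmain := integral_norm_sub_mean_rpow_le hp hp2 hsol.measu hu
  unfold SubIntrinsic at hsi
  rw [max_eq_right hp2, sub_self, Real.rpow_zero, one_mul] at hsi
  unfold average at hsi ⊢
  rw [integral_div] at hsi ⊢
  rw [integral_div]
  set P := ((volume.restrict Q) univ)⁻¹ • volume.restrict Q
  set G := ∫ z, (‖Du z‖ ^ p + ‖F z‖ ^ p) ∂P
  set D := ∫ z, ‖pw (p / 2) (u z) - pw (p / 2) (∫ w, u w ∂P)‖ ^ 2 ∂P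
  have hG : 0 ≤ G := integral_nonneg fun z => by positivity
  have hD : 0 ≤ D := integral_nonneg fun z => by positivity
  have hU : 0 ≤ ∫ z, ‖u z‖ ^ p ∂P := integral_nonneg fun z => by positivity
  have hsi' : ∫ z, ‖u z‖ ^ p ∂P ≤ K * μ ^ p * G * ρ ^ p := (div_le_iff₀ (by positivity)).1 hsi
  rw [div_le_iff₀ (by positivity)]
  refine hmain.trans ?_
  have hpow : (2 * ∫ z, ‖u z‖ ^ p ∂P) ^ (1 - p / 2)
      ≤ (2 * (K * μ ^ p * G * ρ ^ p)) ^ (1 - p / 2) :=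
    Real.rpow_le_rpow (by positivity) (by linarith) (by linarith)
  have hscale : (D / (μ ^ (p - 2) * ρ ^ p)) ^ (p / 2) * ρ ^ p
      = D ^ (p / 2) * (μ ^ p * ρ ^ p) ^ (1 - p / 2) := by
    rw [Real.div_rpow hD (by positivity), Real.mul_rpow (by positivity) (by positivity),
      Real.mul_rpow (by positivity) (by positivity), ← Real.rpow_mul hμ.le, ← Real.rpow_mul hρ.le,
      ← Real.rpow_mul hμ.le, ← Real.rpow_mul hρ.le, div_mul_eq_mul_div, div_eq_iff (by positivity),
      show D ^ (p / 2) * (μ ^ (p * (1 - p / 2)) * ρ ^ (p * (1 - p / 2)))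
          * (μ ^ ((p - 2) * (p / 2)) * ρ ^ (p * (p / 2)))
        = D ^ (p / 2) * ((μ ^ (p * (1 - p / 2)) * μ ^ ((p - 2) * (p / 2)))
          * (ρ ^ (p * (1 - p / 2)) * ρ ^ (p * (p / 2)))) by ring,
      ← Real.rpow_add hμ, ← Real.rpow_add hρ,
      show p * (1 - p / 2) + (p - 2) * (p / 2) = 0 by ring,
      show p * (1 - p / 2) + p * (p / 2) = p by ring, Real.rpow_zero, one_mul]
  calc 2 ^ p * (D ^ (p / 2) * (2 * ∫ z, ‖u z‖ ^ p ∂P) ^ (1 - p / 2))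
      ≤ 2 ^ p * (D ^ (p / 2) * (2 * (K * μ ^ p * G * ρ ^ p)) ^ (1 - p / 2)) := by gcongr
    _ = 2 ^ p * (2 * K) ^ (1 - p / 2) * (D ^ (p / 2) * (μ ^ p * ρ ^ p) ^ (1 - p / 2))
        * G ^ (1 - p / 2) := by
        rw [show 2 * (K * μ ^ p * G * ρ ^ p) = (2 * K) * (μ ^ p * ρ ^ p) * G by ring,
          Real.mul_rpow (by positivity) hG, Real.mul_rpow (by positivity) (by positivity)]
        ring
    _ = _ := by
        rw [← hscale, show (2 - p) / 2 = 1 - p / 2 by ring]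
        ring
end
end

section
/- Parabolic Poincaré inequality, subquadratic case: Let 1 < p ≤ 2 and u be a weak solution of ∂_t(|u|^{p-2}u) − div A(x,t,u,Du) = div(|F|^{p-2}F) in Ω_T. Then on any cylinder Q_ρ^{(μ)}(z_o) ⊆ Ω_T that is μ-sub-intrinsic with constant K, for any q ∈ [1,p] one has ⨍⨍_{Q_ρ^{(μ)}(z_o)} |u − (u)_{z_o;ρ}^{(μ)}|^q/ρ^q dx dt ≤ c [⨍⨍_{Q_ρ^{(μ)}(z_o)} (|Du|^q + |F|^q) dx dt]^{p−1} · [⨍⨍_{Q_ρ^{(μ)}(z_o)} (|Du|^p + |F|^p) dx dt]^{q(2−p)/p}, where c = c(n,p,L,K). -/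
open MeasureTheory Set Filter
open scoped ENNReal Topology BigOperators

noncomputable section

variable {n N : ℕ}

/-! ### Powers of vectors -/

lemma norm_pw {α : ℝ} (hα : 0 < α) (w : Vec N) : ‖pw α w‖ = ‖w‖ ^ α := by
  rcases eq_or_ne w 0 with rfl | hw
  · simp [pw, Real.zero_rpow hα.ne']
  · have h : 0 < ‖w‖ := norm_pos_iff.mpr hw
    rw [pw, norm_smul, Real.norm_of_nonneg (by positivity), ← Real.rpow_add_one h.ne']
    congr 1; ring

lemma pw_pw {α β : ℝ} (hα : 0 < α) (h : α * β = 1) (w : Vec N) : pw β (pw α w) = w := by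
  rcases eq_or_ne w 0 with rfl | hw
  · simp [pw]
  · have hw' : 0 < ‖w‖ := norm_pos_iff.mpr hw
    rw [pw, norm_pw hα, pw, smul_smul, ← Real.rpow_mul hw'.le, ← Real.rpow_add hw']
    have : α * (β - 1) + (α - 1) = 0 := by linarith
    rw [this]; simp

lemma measurable_pw (α : ℝ) : Measurable (pw α : Vec N → Vec N) := by
  unfold pw; fun_prop

lemma max_rpow_mul_norm_pw_sub_le {α : ℝ} (hα : 0 < α) (hα1 : α ≤ 1) (x y : Vec N) :
    max ‖x‖ ‖y‖ ^ (1 - α) * ‖pw α x - pw α y‖ ≤ 2 * ‖x - y‖ := by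
  wlog hxy : ‖y‖ ≤ ‖x‖ generalizing x y with H
  · rw [max_comm, norm_sub_rev (pw α x), norm_sub_rev x]
    exact H y x (le_of_not_ge hxy)
  rw [max_eq_left hxy]
  rcases eq_or_ne x 0 with rfl | hx
  · have : y = 0 := by simpa using hxy
    simp [this]
  have hx' : 0 < ‖x‖ := norm_pos_iff.mpr hx
  have e1 : ‖x‖ ^ (1 - α) * ‖x‖ ^ (α - 1) = 1 := by
    rw [← Real.rpow_add hx']; simp
  have e2 : ‖x‖ ^ (1 - α) * ‖pw α x - pw α y‖
      = ‖(x - y) + (y - (‖x‖ ^ (1 - α)) • pw α y)‖ := by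
    rw [← Real.norm_of_nonneg (by positivity : (0:ℝ) ≤ ‖x‖ ^ (1 - α)), ← norm_smul,
      Real.norm_of_nonneg (by positivity : (0:ℝ) ≤ ‖x‖ ^ (1 - α)), smul_sub]
    congr 1
    rw [pw, smul_smul, e1, one_smul]; abel
  rw [e2]
  have e3 : ‖y - (‖x‖ ^ (1 - α)) • pw α y‖ ≤ ‖x‖ - ‖y‖ := by
    rcases eq_or_ne y 0 with rfl | hy
    · simp [pw]
    have hy' : 0 < ‖y‖ := norm_pos_iff.mpr hy
    have : y - (‖x‖ ^ (1 - α)) • pw α y = (1 - ‖x‖ ^ (1 - α) * ‖y‖ ^ (α - 1)) • y := by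
      rw [pw, smul_smul, sub_smul, one_smul]
    have h1 : 1 ≤ ‖x‖ ^ (1 - α) * ‖y‖ ^ (α - 1) := by
      have : ‖y‖ ^ (1 - α) * ‖y‖ ^ (α - 1) = 1 := by rw [← Real.rpow_add hy']; simp
      refine this.symm.le.trans ?_
      gcongr
    rw [this, norm_smul, Real.norm_of_nonpos (by linarith)]
    have h2 : ‖x‖ ^ (1 - α) * ‖y‖ ^ (α - 1) * ‖y‖ ≤ ‖x‖ := by
      have h3 : ‖y‖ ^ (α - 1) * ‖y‖ = ‖y‖ ^ α := by
        rw [← Real.rpow_add_one hy'.ne']; congr 1; ring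
      have h4 : ‖x‖ ^ (1 - α) * ‖x‖ ^ α = ‖x‖ := by
        rw [← Real.rpow_add hx']; simp
      rw [mul_assoc, h3]
      nth_rewrite 2 [← h4]
      gcongr
    nlinarith
  have e4 : ‖x‖ - ‖y‖ ≤ ‖x - y‖ := norm_sub_norm_le x y
  linarith [norm_add_le (x - y) (y - (‖x‖ ^ (1 - α)) • pw α y)]

lemma norm_pw_sub_le {α : ℝ} (hα : 0 < α) (hα1 : α ≤ 1) (x y : Vec N) :
    ‖pw α x - pw α y‖ ≤ 4 * ‖x - y‖ ^ α := by
  rcases eq_or_ne x y with rfl | hne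
  · simp [Real.zero_rpow hα.ne']
  have hd : 0 < ‖x - y‖ := norm_pos_iff.mpr (sub_ne_zero.mpr hne)
  have hm : ‖x - y‖ / 2 ≤ max ‖x‖ ‖y‖ := by
    have := norm_sub_le x y
    have := le_max_left ‖x‖ ‖y‖
    have := le_max_right ‖x‖ ‖y‖
    linarith
  have h1 := max_rpow_mul_norm_pw_sub_le hα hα1 x y
  have h2 : (‖x - y‖ / 2) ^ (1 - α) ≤ max ‖x‖ ‖y‖ ^ (1 - α) := by
    gcongr
  have h3 : ‖x - y‖ ^ (1 - α) / 2 ≤ (‖x - y‖ / 2) ^ (1 - α) := by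
    rw [Real.div_rpow hd.le (by norm_num)]
    gcongr
    calc (2:ℝ) ^ (1 - α) ≤ 2 ^ (1:ℝ) := Real.rpow_le_rpow_of_exponent_le (by norm_num) (by linarith)
      _ = 2 := by simp
  have h4 : ‖x - y‖ = ‖x - y‖ ^ (1 - α) * ‖x - y‖ ^ α := by
    rw [← Real.rpow_add hd]; simp
  have h5 : ‖x - y‖ ^ (1 - α) / 2 * ‖pw α x - pw α y‖
      ≤ 2 * (‖x - y‖ ^ (1 - α) * ‖x - y‖ ^ α) := by
    rw [← h4]
    refine le_trans ?_ h1
    gcongr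
    exact h3.trans h2
  have h6 : 0 < ‖x - y‖ ^ (1 - α) := by positivity
  by_contra! hc
  nlinarith

lemma norm_pw_sub_le_mul {β : ℝ} (hβ : 1 ≤ β) (x y : Vec N) :
    ‖pw β x - pw β y‖ ≤ β * (max ‖x‖ ‖y‖ ^ (β - 1) * ‖x - y‖) := by
  wlog hxy : ‖y‖ ≤ ‖x‖ generalizing x y with H
  · rw [max_comm, norm_sub_rev (pw β x), norm_sub_rev x]
    exact H y x (le_of_not_ge hxy)
  rw [max_eq_left hxy]
  rcases eq_or_ne x 0 with rfl | hx
  · have : y = 0 := by simpa using hxy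
    simp [this]
  have hx' : 0 < ‖x‖ := norm_pos_iff.mpr hx
  have e1 : pw β x - pw β y
      = ‖x‖ ^ (β - 1) • (x - y) + (‖x‖ ^ (β - 1) - ‖y‖ ^ (β - 1)) • y := by
    simp only [pw, smul_sub, sub_smul]; abel
  have hmono : ‖y‖ ^ (β - 1) ≤ ‖x‖ ^ (β - 1) := by gcongr
  have e2 : (‖x‖ ^ (β - 1) - ‖y‖ ^ (β - 1)) * ‖y‖
      ≤ (β - 1) * (‖x‖ ^ (β - 1) * (‖x‖ - ‖y‖)) := by
    have hb := one_add_mul_self_le_rpow_one_add (s := ‖y‖ / ‖x‖ - 1)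
      (by have : 0 ≤ ‖y‖ / ‖x‖ := by positivity
          linarith) hβ
    rw [add_sub_cancel, Real.div_rpow (norm_nonneg _) hx'.le] at hb
    have hxβ : ‖x‖ ^ β = ‖x‖ ^ (β - 1) * ‖x‖ := by
      rw [← Real.rpow_add_one hx'.ne']; congr 1; ring
    have hyβ : ‖y‖ ^ β = ‖y‖ ^ (β - 1) * ‖y‖ := by
      rcases eq_or_ne y 0 with rfl | hy
      · simp [Real.zero_rpow (by linarith : β ≠ 0)]
      · rw [← Real.rpow_add_one (norm_ne_zero_iff.mpr hy)]; congr 1; ring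
    have hpos : 0 < ‖x‖ ^ β := by positivity
    have hb' := mul_le_mul_of_nonneg_left hb hpos.le
    have t1 : ‖x‖ ^ β * (‖y‖ ^ β / ‖x‖ ^ β) = ‖y‖ ^ β := by field_simp
    have t2 : ‖x‖ ^ β * (1 + β * (‖y‖ / ‖x‖ - 1))
        = ‖x‖ ^ (β - 1) * (‖x‖ + β * (‖y‖ - ‖x‖)) := by
      rw [hxβ]; field_simp
    rw [t1, t2, hyβ] at hb'
    nlinarith
  rw [e1]
  refine (norm_add_le _ _).trans ?_
  rw [norm_smul, norm_smul, Real.norm_of_nonneg (by positivity), Real.norm_of_nonneg (by linarith)]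
  have e4 : ‖x‖ - ‖y‖ ≤ ‖x - y‖ := norm_sub_norm_le x y
  have e5 : ‖x‖ ^ (β - 1) * (‖x‖ - ‖y‖) ≤ ‖x‖ ^ (β - 1) * ‖x - y‖ := by gcongr
  nlinarith

/-! ### Finite differences of functions with a weak directional derivative -/

section Translation

lemma tsupport_comp_sub_smul_subset {E : Type*} [NormedAddCommGroup E] [NormedSpace ℝ E]
    {Q : Set E} (hQc : Convex ℝ Q) {h : E} {ψ : E → ℝ}
    (hψ : tsupport ψ ⊆ Q ∩ (fun z => z + h) ⁻¹' Q) {s : ℝ} (hs : s ∈ Icc (0 : ℝ) 1) :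
    tsupport (fun z => ψ (z - s • h)) ⊆ Q := by
  have e : tsupport (fun z => ψ (z - s • h)) = (fun z => z - s • h) ⁻¹' tsupport ψ :=
    tsupport_comp_eq_preimage ψ (Homeomorph.subRight (s • h))
  rw [e]
  intro z hz
  obtain ⟨h1, h2⟩ := hψ hz
  have := hQc h1 h2 (sub_nonneg.mpr hs.2) hs.1 (by ring)
  convert this using 1
  module

lemma hasCompactSupport_comp_sub {E : Type*} [NormedAddCommGroup E] {ψ : E → ℝ}
    (hψ : HasCompactSupport ψ) (a : E) :
    HasCompactSupport (fun z => ψ (z - a)) :=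
  hψ.comp_homeomorph (Homeomorph.subRight a)

variable {E G : Type*} [NormedAddCommGroup E] [NormedSpace ℝ E] [FiniteDimensional ℝ E]
  [MeasurableSpace E] [BorelSpace E] {μ : Measure E} [μ.IsAddHaarMeasure]
  [NormedAddCommGroup G]

lemma integrable_comp_add_smul_prod {g : E → G} (hg : StronglyMeasurable g) (hgi : Integrable g μ)
    (h : E) (a b : ℝ) :
    Integrable (fun w : E × ℝ => g (w.1 + w.2 • h)) (μ.prod (volume.restrict (Ioc a b))) := by
  have hm : StronglyMeasurable (fun w : E × ℝ => g (w.1 + w.2 • h)) :=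
    hg.comp_measurable (by fun_prop)
  rw [integrable_prod_iff' hm.aestronglyMeasurable]
  refine ⟨ae_of_all _ fun s => hgi.comp_add_right (s • h), ?_⟩
  have : (fun y : ℝ => ∫ x, ‖g (x + y • h)‖ ∂μ) = fun _ => ∫ x, ‖g x‖ ∂μ := by
    ext y
    exact integral_add_right_eq_self (fun x => ‖g x‖) (y • h)
  simp only [this]
  exact integrable_const _

variable [NormedSpace ℝ G]

/-- If `g` is the weak derivative of `f` in direction `h` on an open convex set `Q`, then the
increments of `f` in direction `h` are given by the fundamental theorem of calculus. -/
theorem ae_sub_eq_intervalIntegral_of_weakDeriv [CompleteSpace G] {Q : Set E}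
    (hQo : IsOpen Q) (hQc : Convex ℝ Q)
    {f g : E → G} (hf : IntegrableOn f Q μ) (hg : IntegrableOn g Q μ) (hgm : StronglyMeasurable g)
    (h : E)
    (hw : ∀ ψ : E → ℝ, ContDiff ℝ (⊤ : ℕ∞) ψ → HasCompactSupport ψ → tsupport ψ ⊆ Q →
      ∫ z in Q, fderiv ℝ ψ z h • f z ∂μ = - ∫ z in Q, ψ z • g z ∂μ) :
    ∀ᵐ z ∂μ, z ∈ Q → z + h ∈ Q → f (z + h) - f z = ∫ s in (0 : ℝ)..1, g (z + s • h) := by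
  have hQm : MeasurableSet Q := hQo.measurableSet
  set f' : E → G := Q.indicator f with hf'
  set g' : E → G := Q.indicator g with hg'
  have hfi : Integrable f' μ := hf.integrable_indicator hQm
  have hgi : Integrable g' μ := hg.integrable_indicator hQm
  have hgm' : StronglyMeasurable g' := hgm.indicator hQm
  have hprod := integrable_comp_add_smul_prod (μ := μ) hgm' hgi h 0 1
  set U : Set E := Q ∩ (fun z => z + h) ⁻¹' Q with hU
  have hUo : IsOpen U := hQo.inter (hQo.preimage (by fun_prop))
  set J : E → G := fun z => ∫ s in (0 : ℝ)..1, g' (z + s • h) with hJ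
  have hJ' : J = fun z => ∫ s in Ioc (0 : ℝ) 1, g' (z + s • h) := by
    ext z; simp only [hJ]; rw [intervalIntegral.integral_of_le zero_le_one]
  have hJi : Integrable J μ := by rw [hJ']; exact hprod.integral_prod_left
  have hfh : Integrable (fun z => f' (z + h)) μ := hfi.comp_add_right h
  have key : ∀ᵐ z ∂μ, z ∈ U → f' (z + h) - f' z - J z = 0 := by
    refine hUo.ae_eq_zero_of_integral_contDiff_smul_eq_zero
      (((hfh.sub hfi).sub hJi).locallyIntegrable.locallyIntegrableOn U) ?_
    intro ψ hψ hψc hψU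
    have hψcont : Continuous ψ := hψ.continuous
    have hdcont : Continuous (fun z => fderiv ℝ ψ z h) :=
      (hψ.continuous_fderiv (by simp)).clm_apply continuous_const
    obtain ⟨C, hC⟩ := hψcont.bounded_above_of_compact_support hψc
    have hdc : HasCompactSupport (fun z => fderiv ℝ ψ z h) := hψc.fderiv_apply ℝ h
    obtain ⟨C', hC'⟩ := hdcont.bounded_above_of_compact_support hdc
    have bsmul : ∀ {k : E → G}, Integrable k μ → Integrable (fun z => ψ z • k z) μ :=
      fun hk => hk.bdd_smul C hψcont.aestronglyMeasurable (ae_of_all _ hC)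
    have hbsub : Integrable (fun z => ψ (z - h) • f' z) μ :=
      hfi.bdd_smul C (hψcont.comp (by fun_prop)).aestronglyMeasurable (ae_of_all _ fun _ => hC _)
    have htranslate : ∫ z, ψ z • f' (z + h) ∂μ = ∫ z, ψ (z - h) • f' z ∂μ := by
      rw [← integral_add_right_eq_self (fun z => ψ (z - h) • f' z) h]
      simp
    have hdiff : ∀ z, ψ (z - h) - ψ z = - ∫ s in (0:ℝ)..1, fderiv ℝ ψ (z - s • h) h := by
      intro z
      have hd : ∀ s ∈ uIcc (0:ℝ) 1, HasDerivAt (fun s : ℝ => ψ (z - s • h))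
          (- fderiv ℝ ψ (z - s • h) h) s := by
        intro s _
        have h1 : HasDerivAt (fun s : ℝ => z - s • h) (-h) s := by
          simpa using ((hasDerivAt_id s).smul_const h).const_sub z
        have h2 := ((hψ.differentiable (by simp)) (z - s • h)).hasFDerivAt.comp_hasDerivAt s h1
        rw [map_neg] at h2
        exact h2
      have := intervalIntegral.integral_eq_sub_of_hasDerivAt hd
        (Continuous.intervalIntegrable (hdcont.comp (by fun_prop)).neg _ _)
      simp only [one_smul, zero_smul, sub_zero, intervalIntegral.integral_neg] at this
      rw [this]
    have hprod2 : Integrable (fun w : E × ℝ => fderiv ℝ ψ (w.1 - w.2 • h) h • f' w.1)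
        (μ.prod (volume.restrict (Ioc (0:ℝ) 1))) :=
      (hfi.comp_fst _).bdd_smul C' (hdcont.comp (by fun_prop)).aestronglyMeasurable
        (ae_of_all _ fun _ => hC' _)
    have hprod3 : Integrable (fun w : E × ℝ => ψ w.1 • g' (w.1 + w.2 • h))
        (μ.prod (volume.restrict (Ioc (0:ℝ) 1))) :=
      hprod.bdd_smul C (hψcont.comp (by fun_prop)).aestronglyMeasurable
        (ae_of_all _ fun _ => hC _)
    have hslice : ∀ s ∈ Ioc (0:ℝ) 1, ∫ z, fderiv ℝ ψ (z - s • h) h • f' z ∂μ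
        = - ∫ z, ψ z • g' (z + s • h) ∂μ := by
      intro s hs
      have hw' := hw (fun z => ψ (z - s • h)) (hψ.comp (by fun_prop))
        (hasCompactSupport_comp_sub hψc _)
        (tsupport_comp_sub_smul_subset hQc hψU ⟨hs.1.le, hs.2⟩)
      have e1 : ∫ z in Q, fderiv ℝ (fun z => ψ (z - s • h)) z h • f z ∂μ
          = ∫ z, fderiv ℝ ψ (z - s • h) h • f' z ∂μ := by
        rw [← integral_indicator hQm]
        congr 1; ext z
        by_cases hz : z ∈ Q <;> simp [hf', hz, fderiv_comp_sub]
      have e2 : ∫ z in Q, ψ (z - s • h) • g z ∂μ = ∫ z, ψ z • g' (z + s • h) ∂μ := by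
        rw [← integral_indicator hQm,
          ← integral_add_right_eq_self (Q.indicator fun z => ψ (z - s • h) • g z) (s • h)]
        congr 1; ext z
        by_cases hz : z + s • h ∈ Q <;> simp [hg', hz]
      rw [← e1, hw', e2]
    have hexchange : ∫ z, (ψ (z - h) - ψ z) • f' z ∂μ = ∫ z, ψ z • J z ∂μ := by
      calc ∫ z, (ψ (z - h) - ψ z) • f' z ∂μ
          = - ∫ z, (∫ s in Ioc (0:ℝ) 1, fderiv ℝ ψ (z - s • h) h • f' z) ∂μ := by
            rw [← integral_neg]
            congr 1; ext z
            rw [hdiff, integral_smul_const, intervalIntegral.integral_of_le zero_le_one, neg_smul]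
        _ = - ∫ s in Ioc (0:ℝ) 1, ∫ z, fderiv ℝ ψ (z - s • h) h • f' z ∂μ := by
            rw [integral_integral_swap hprod2]
        _ = ∫ s in Ioc (0:ℝ) 1, ∫ z, ψ z • g' (z + s • h) ∂μ := by
            rw [← integral_neg]
            refine setIntegral_congr_fun measurableSet_Ioc fun s hs => ?_
            rw [hslice s hs, neg_neg]
        _ = ∫ z, (∫ s in Ioc (0:ℝ) 1, ψ z • g' (z + s • h)) ∂μ := by
            exact (integral_integral_swap hprod3).symm
        _ = ∫ z, ψ z • J z ∂μ := by
            congr 1; ext z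
            rw [hJ', integral_smul]
    calc ∫ z, ψ z • (f' (z + h) - f' z - J z) ∂μ
        = ∫ z, ψ z • f' (z + h) ∂μ - ∫ z, ψ z • f' z ∂μ - ∫ z, ψ z • J z ∂μ := by
          simp only [smul_sub]
          rw [integral_sub (by exact (bsmul hfh).sub (bsmul hfi)) (bsmul hJi),
            integral_sub (bsmul hfh) (bsmul hfi)]
      _ = 0 := by
          rw [htranslate, ← hexchange, ← integral_sub hbsub (bsmul hfi)]
          simp only [sub_smul, sub_self]
  filter_upwards [key] with z hz h1 h2
  have := hz ⟨h1, h2⟩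
  simp only [hf', h1, h2, indicator_of_mem] at this
  rw [sub_eq_zero.mp this, hJ]
  refine intervalIntegral.integral_congr fun s hs => ?_
  rw [uIcc_of_le zero_le_one] at hs
  have : z + s • h ∈ Q := by
    have := hQc h1 h2 (sub_nonneg.mpr hs.2) hs.1 (by ring)
    convert this using 1; module
  simp [hg', this]

/-- Norm form of `ae_sub_eq_intervalIntegral_of_weakDeriv`. -/
theorem ae_enorm_sub_le_of_weakDeriv [CompleteSpace G] {Q : Set E}
    (hQo : IsOpen Q) (hQc : Convex ℝ Q)
    {f g : E → G} (hf : IntegrableOn f Q μ) (hg : IntegrableOn g Q μ) (hgm : StronglyMeasurable g)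
    (h : E)
    (hw : ∀ ψ : E → ℝ, ContDiff ℝ (⊤ : ℕ∞) ψ → HasCompactSupport ψ → tsupport ψ ⊆ Q →
      ∫ z in Q, fderiv ℝ ψ z h • f z ∂μ = - ∫ z in Q, ψ z • g z ∂μ) :
    ∀ᵐ z ∂μ, z ∈ Q → z + h ∈ Q →
      ‖f (z + h) - f z‖ₑ ≤ ∫⁻ s in Ioc (0 : ℝ) 1, ‖g (z + s • h)‖ₑ := by
  filter_upwards [ae_sub_eq_intervalIntegral_of_weakDeriv hQo hQc hf hg hgm h hw] with z hz h1 h2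
  rw [hz h1 h2, intervalIntegral.integral_of_le zero_le_one]
  exact enorm_integral_le_lintegral_enorm _

end Translation

/-! ### Jensen's inequality for powers of lower Lebesgue integrals -/

lemma rpow_lintegral_le_lintegral_rpow {X : Type*} [MeasurableSpace X] {μ : Measure X}
    [IsProbabilityMeasure μ] {q : ℝ} (hq : 1 ≤ q) {f : X → ℝ≥0∞} (hf : AEMeasurable f μ) :
    (∫⁻ x, f x ∂μ) ^ q ≤ ∫⁻ x, f x ^ q ∂μ := by
  rcases hq.eq_or_lt with rfl | hq
  · simp
  have hc := Real.HolderConjugate.conjExponent hq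
  have h := ENNReal.lintegral_mul_le_Lp_mul_Lq μ hc hf (aemeasurable_const (b := (1 : ℝ≥0∞)))
  simp only [Pi.mul_apply, mul_one, ENNReal.one_rpow, lintegral_const, measure_univ] at h
  calc (∫⁻ x, f x ∂μ) ^ q ≤ ((∫⁻ x, f x ^ q ∂μ) ^ (1 / q)) ^ q :=
        ENNReal.rpow_le_rpow h (by linarith)
    _ = ∫⁻ x, f x ^ q ∂μ := by
        rw [← ENNReal.rpow_mul, one_div_mul_cancel (by linarith), ENNReal.rpow_one]

lemma lintegral_rpow_le_rpow_lintegral {X : Type*} [MeasurableSpace X] {μ : Measure X}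
    [IsProbabilityMeasure μ] {θ : ℝ} (h0 : 0 ≤ θ) (h1 : θ ≤ 1) {f : X → ℝ≥0∞}
    (hf : AEMeasurable f μ) :
    ∫⁻ x, f x ^ θ ∂μ ≤ (∫⁻ x, f x ∂μ) ^ θ := by
  rcases h0.eq_or_lt with rfl | h0
  · simp
  have h := rpow_lintegral_le_lintegral_rpow (μ := μ) (one_le_one_div h0 h1) (hf.pow_const θ)
  simp only [← ENNReal.rpow_mul, mul_one_div_cancel h0.ne', ENNReal.rpow_one] at h
  calc ∫⁻ x, f x ^ θ ∂μ = ((∫⁻ x, f x ^ θ ∂μ) ^ (1 / θ)) ^ θ := by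
        rw [← ENNReal.rpow_mul, one_div_mul_cancel h0.ne', ENNReal.rpow_one]
    _ ≤ _ := ENNReal.rpow_le_rpow h h0.le

/-! ### Matrices acting on vectors -/

/-- The product `M k` of a matrix and a vector, with respect to the Euclidean structures. -/
def matVec (M : Mat N n) (k : Spc n) : Vec N := WithLp.toLp 2 fun i => ∑ j, M (i, j) * k j

lemma matVec_apply (M : Mat N n) (k : Spc n) (i : Fin N) :
    matVec M k i = ∑ j, M (i, j) * k j := rfl

lemma norm_matVec_le (M : Mat N n) (k : Spc n) : ‖matVec M k‖ ≤ ‖M‖ * ‖k‖ := by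
  rw [EuclideanSpace.norm_eq, EuclideanSpace.norm_eq, EuclideanSpace.norm_eq,
    ← Real.sqrt_mul (by positivity)]
  apply Real.sqrt_le_sqrt
  simp only [Real.norm_eq_abs, sq_abs]
  rw [Fintype.sum_prod_type, Finset.sum_mul]
  refine Finset.sum_le_sum fun i _ => ?_
  rw [matVec_apply]
  exact Finset.sum_mul_sq_le_sq_mul_sq _ _ _

lemma enorm_matVec_le (M : Mat N n) (k : Spc n) : ‖matVec M k‖ₑ ≤ ‖M‖ₑ * ‖k‖ₑ := by
  simp only [← ofReal_norm]
  rw [← ENNReal.ofReal_mul (norm_nonneg _)]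
  exact ENNReal.ofReal_le_ofReal (norm_matVec_le M k)

lemma continuous_matVec (k : Spc n) : Continuous fun M : Mat N n => matVec M k := by
  unfold matVec; fun_prop

/-! ### Poincaré inequality on time slices -/

lemma fderiv_spatial_eq_sum {ψ : Spc n × ℝ → ℝ} (hψ : Differentiable ℝ ψ) (z : Spc n × ℝ)
    (k : Spc n) : fderiv ℝ ψ z (k, 0) = ∑ j, k j * pderivS j ψ z := by
  have h1 : ∀ v : Spc n, fderiv ℝ (fun y => ψ (y, z.2)) z.1 v = fderiv ℝ ψ z (v, 0) := by
    intro v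
    have h2 : HasFDerivAt (fun y : Spc n => (y, z.2))
        (ContinuousLinearMap.inl ℝ (Spc n) ℝ) z.1 := hasFDerivAt_prodMk_left z.1 z.2
    have h3 := (hψ (z.1, z.2)).hasFDerivAt.comp z.1 h2
    rw [show (fun y => ψ (y, z.2)) = ψ ∘ fun y : Spc n => (y, z.2) from rfl, h3.fderiv]
    simp
  simp only [pderivS, h1]
  have h4 : (k, (0 : ℝ)) = ∑ j, k j • (EuclideanSpace.single j (1:ℝ), (0 : ℝ)) := by
    refine Prod.ext ?_ ?_
    · rw [Prod.fst_sum]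
      ext i
      simp [Pi.single_apply]
    · rw [Prod.snd_sum]; simp
  conv_lhs => rw [h4, map_sum]
  simp only [map_smul, smul_eq_mul]

lemma continuous_pderivS {ψ : Spc n × ℝ → ℝ} (hψ : ContDiff ℝ (⊤ : ℕ∞) ψ) (j : Fin n) :
    Continuous (pderivS j ψ) := by
  have : pderivS j ψ = fun z => fderiv ℝ ψ z (EuclideanSpace.single j 1, 0) := by
    ext z
    rw [fderiv_spatial_eq_sum (hψ.differentiable (by simp))]
    simp
  rw [this]
  exact (hψ.continuous_fderiv (by simp)).clm_apply continuous_const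

instance : (volume : Measure (Spc n × ℝ)).IsAddHaarMeasure := by
  rw [Measure.volume_eq_prod]; infer_instance

lemma integral_vec_apply {X : Type*} [MeasurableSpace X] {μ : Measure X} {f : X → Vec N}
    (hf : Integrable f μ) (i : Fin N) : (∫ x, f x ∂μ) i = ∫ x, f x i ∂μ :=
  ((EuclideanSpace.proj (𝕜 := ℝ) i).integral_comp_comm hf).symm

/-- `Du` is the weak spatial gradient of `u` on `Q`. -/
def HasWeakGradOn (u : Spc n × ℝ → Vec N) (Du : Spc n × ℝ → Mat N n) (Q : Set (Spc n × ℝ)) :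
    Prop :=
  ∀ ψ : Spc n × ℝ → ℝ, ContDiff ℝ (⊤ : ℕ∞) ψ → HasCompactSupport ψ → tsupport ψ ⊆ Q →
    ∀ (i : Fin N) (j : Fin n), ∫ z in Q, u z i * pderivS j ψ z = - ∫ z in Q, Du z (i, j) * ψ z

lemma HasWeakGradOn.integral_fderiv_smul {u : Spc n × ℝ → Vec N} {Du : Spc n × ℝ → Mat N n}
    {Q : Set (Spc n × ℝ)} (hw : HasWeakGradOn u Du Q) (hu : IntegrableOn u Q)
    (hDu : IntegrableOn Du Q) (k : Spc n) {ψ : Spc n × ℝ → ℝ} (hψ : ContDiff ℝ (⊤ : ℕ∞) ψ)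
    (hψc : HasCompactSupport ψ) (hψQ : tsupport ψ ⊆ Q) :
    ∫ z in Q, fderiv ℝ ψ z (k, 0) • u z = - ∫ z in Q, ψ z • matVec (Du z) k := by
  obtain ⟨C, hC⟩ := hψ.continuous.bounded_above_of_compact_support hψc
  have hdcont : ∀ v : Spc n × ℝ, Continuous (fun z => fderiv ℝ ψ z v) := fun v =>
    (hψ.continuous_fderiv (by simp)).clm_apply continuous_const
  have hdb : ∀ v : Spc n × ℝ, ∃ C', ∀ z, ‖fderiv ℝ ψ z v‖ ≤ C' := fun v =>
    (hdcont v).bounded_above_of_compact_support (hψc.fderiv_apply ℝ v)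
  have hpd : ∀ j, pderivS j ψ = fun z => fderiv ℝ ψ z (EuclideanSpace.single j 1, 0) := by
    intro j; ext z
    rw [fderiv_spatial_eq_sum (hψ.differentiable (by simp))]
    simp
  have hui : ∀ i, IntegrableOn (fun z => u z i) Q := fun i =>
    (EuclideanSpace.proj (𝕜 := ℝ) i).integrable_comp hu
  have hDui : ∀ i, IntegrableOn (fun z => Du z i) Q := fun i =>
    (EuclideanSpace.proj (𝕜 := ℝ) i).integrable_comp hDu
  have hi1 : Integrable (fun z => fderiv ℝ ψ z (k, 0) • u z) (volume.restrict Q) := by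
    obtain ⟨C', hC'⟩ := hdb (k, 0)
    exact Integrable.bdd_smul hu C' (hdcont _).aestronglyMeasurable (ae_of_all _ hC')
  have hmv : Integrable (fun z => matVec (Du z) k) (volume.restrict Q) := by
    refine (hDu.norm.mul_const ‖k‖).mono'
      ((continuous_matVec k).comp_aestronglyMeasurable hDu.aestronglyMeasurable)
      (ae_of_all _ fun z => norm_matVec_le _ _)
  have hi2 : Integrable (fun z => ψ z • matVec (Du z) k) (volume.restrict Q) :=
    hmv.bdd_smul C hψ.continuous.aestronglyMeasurable (ae_of_all _ hC)
  ext i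
  rw [PiLp.neg_apply, integral_vec_apply hi1, integral_vec_apply hi2]
  simp only [PiLp.smul_apply, smul_eq_mul, matVec_apply,
    fderiv_spatial_eq_sum (hψ.differentiable (by simp))]
  have e1 : ∀ z, (∑ j, k j * pderivS j ψ z) * u z i = ∑ j, k j * (u z i * pderivS j ψ z) := by
    intro z; rw [Finset.sum_mul]; exact Finset.sum_congr rfl fun j _ => by ring
  have e2 : ∀ z, ψ z * ∑ j, Du z (i, j) * k j = ∑ j, k j * (Du z (i, j) * ψ z) := by
    intro z; rw [Finset.mul_sum]; exact Finset.sum_congr rfl fun j _ => by ring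
  simp only [e1, e2]
  rw [integral_finsetSum, integral_finsetSum, ← Finset.sum_neg_distrib]
  · refine Finset.sum_congr rfl fun j _ => ?_
    rw [integral_const_mul, integral_const_mul, hw ψ hψ hψc hψQ i j, mul_neg]
  · intro j _
    exact ((hDui (i, j)).mul_bdd (c := C) hψ.continuous.aestronglyMeasurable
      (ae_of_all _ hC)).const_mul _
  · intro j _
    obtain ⟨C', hC'⟩ := hdb (EuclideanSpace.single j 1, 0)
    refine (Integrable.mul_bdd (c := C') (hui i) (continuous_pderivS hψ j).aestronglyMeasurable
      (ae_of_all _ fun z => ?_)).const_mul _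
    rw [hpd]; exact hC' z

lemma HasWeakGradOn.ae_enorm_sub_rpow_le {u : Spc n × ℝ → Vec N} {Du : Spc n × ℝ → Mat N n}
    {Q : Set (Spc n × ℝ)} (hw : HasWeakGradOn u Du Q) (hQo : IsOpen Q) (hQc : Convex ℝ Q)
    (hu : IntegrableOn u Q) (hDum : Measurable Du)
    (hDu : IntegrableOn Du Q) {q : ℝ} (hq : 1 ≤ q) (k : Spc n) :
    ∀ᵐ z : Spc n × ℝ, z ∈ Q → z + (k, 0) ∈ Q → ‖u (z + (k, 0)) - u z‖ₑ ^ q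
      ≤ ‖k‖ₑ ^ q * ∫⁻ s in Ioc (0 : ℝ) 1, ‖Du (z + s • (k, (0 : ℝ)))‖ₑ ^ q := by
  have hmv : IntegrableOn (fun z => matVec (Du z) k) Q := by
    refine (hDu.norm.mul_const ‖k‖).mono'
      ((continuous_matVec k).comp_aestronglyMeasurable hDu.aestronglyMeasurable)
      (ae_of_all _ fun z => norm_matVec_le _ _)
  have hmvm : StronglyMeasurable (fun z => matVec (Du z) k) :=
    ((continuous_matVec k).measurable.comp hDum).stronglyMeasurable
  filter_upwards [ae_enorm_sub_le_of_weakDeriv hQo hQc hu hmv hmvm (k, 0)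
    (fun ψ h1 h2 h3 => hw.integral_fderiv_smul hu hDu k h1 h2 h3)] with z hz h1 h2
  have : IsProbabilityMeasure (volume.restrict (Ioc (0:ℝ) 1)) := ⟨by simp⟩
  have hm : Measurable fun s : ℝ => ‖Du (z + s • (k, (0 : ℝ)))‖ₑ :=
    (hDum.comp (by fun_prop)).enorm
  calc ‖u (z + (k, 0)) - u z‖ₑ ^ q
      ≤ (∫⁻ s in Ioc (0 : ℝ) 1, ‖k‖ₑ * ‖Du (z + s • (k, (0 : ℝ)))‖ₑ) ^ q := by
        refine ENNReal.rpow_le_rpow ((hz h1 h2).trans (lintegral_mono fun s => ?_)) (by linarith)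
        rw [mul_comm]; exact enorm_matVec_le _ _
    _ = ‖k‖ₑ ^ q * (∫⁻ s in Ioc (0 : ℝ) 1, ‖Du (z + s • (k, (0 : ℝ)))‖ₑ) ^ q := by
        rw [lintegral_const_mul _ hm, ENNReal.mul_rpow_of_nonneg _ _ (by linarith)]
    _ ≤ _ := by
        gcongr
        exact rpow_lintegral_le_lintegral_rpow hq hm.aemeasurable

/-- Poincaré inequality on a space-time cylinder, in terms of differences in space. -/
theorem HasWeakGradOn.lintegral_enorm_sub_rpow_le {u : Spc n × ℝ → Vec N}
    {Du : Spc n × ℝ → Mat N n} {x₀ : Spc n} {ρ : ℝ} {I : Set ℝ} (hI : IsOpen I)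
    (hIc : Convex ℝ I) (hw : HasWeakGradOn u Du (Metric.ball x₀ ρ ×ˢ I))
    (hum : Measurable u) (hu : IntegrableOn u (Metric.ball x₀ ρ ×ˢ I)) (hDum : Measurable Du)
    (hDu : IntegrableOn Du (Metric.ball x₀ ρ ×ˢ I)) {q : ℝ} (hq : 1 ≤ q) :
    ∫⁻ z in Metric.ball x₀ ρ ×ˢ I, ∫⁻ y in Metric.ball x₀ ρ, ‖u (y, z.2) - u z‖ₑ ^ q
      ≤ ENNReal.ofReal (2 * ρ) ^ q * volume (Metric.ball (0 : Spc n) (2 * ρ))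
        * ∫⁻ z in Metric.ball x₀ ρ ×ˢ I, ‖Du z‖ₑ ^ q := by
  set B := Metric.ball x₀ ρ with hB
  set Q := B ×ˢ I with hQ
  have hBm : MeasurableSet B := Metric.isOpen_ball.measurableSet
  have hQo : IsOpen Q := Metric.isOpen_ball.prod hI
  have hQm : MeasurableSet Q := hQo.measurableSet
  have hQc : Convex ℝ Q := (convex_ball x₀ ρ).prod hIc
  set χ : Spc n × ℝ → ℝ≥0∞ := Q.indicator 1 with hχ
  have hχm : Measurable χ := measurable_one.indicator hQm
  have hq0 : 0 ≤ q := by linarith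
  set T : ℝ → Spc n → Spc n × ℝ → Spc n × ℝ := fun s k z => z + s • (k, (0 : ℝ)) with hT
  have hTm : ∀ {X : Type} [MeasurableSpace X] {a : X → ℝ} {b : X → Spc n} {c : X → Spc n × ℝ},
      Measurable a → Measurable b → Measurable c → Measurable fun x => T (a x) (b x) (c x) := by
    intro X _ a b c ha hb hc
    simp only [hT]; fun_prop
  have hsmall : ∀ z k, z ∈ Q → z + (k, (0:ℝ)) ∈ Q → ‖k‖ₑ ≤ ENNReal.ofReal (2 * ρ) ∧
      k ∈ Metric.ball (0 : Spc n) (2 * ρ) := by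
    intro z k h1 h2
    have h3 : dist z.1 x₀ < ρ := h1.1
    have h4 : dist (z.1 + k) x₀ < ρ := h2.1
    have h5 : ‖k‖ < 2 * ρ := by
      have : k = (z.1 + k - x₀) - (z.1 - x₀) := by abel
      rw [this]
      rw [dist_eq_norm] at h3 h4
      linarith [norm_sub_le (z.1 + k - x₀) (z.1 - x₀)]
    refine ⟨?_, by simpa using h5⟩
    rw [← ofReal_norm]; exact ENNReal.ofReal_le_ofReal h5.le
  have hL : ∫⁻ z in Q, ∫⁻ y in B, ‖u (y, z.2) - u z‖ₑ ^ q
      = ∫⁻ k : Spc n, ∫⁻ z, χ z * χ (z + (k, 0)) * ‖u (z + (k, 0)) - u z‖ₑ ^ q := by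
    refine Eq.symm ((lintegral_lintegral_swap ?_).trans ?_)
    rotate_left
    · rw [← lintegral_indicator hQm]
      refine lintegral_congr fun z => ?_
      by_cases hz : z ∈ Q
      · rw [indicator_of_mem hz, ← lintegral_indicator hBm,
          ← lintegral_add_left_eq_self (B.indicator _) z.1]
        refine lintegral_congr fun k => ?_
        have hiff : z + (k, (0 : ℝ)) ∈ Q ↔ z.1 + k ∈ B := by
          simp only [hQ, mem_prod, Prod.fst_add, Prod.snd_add, add_zero]
          exact and_iff_left hz.2
        by_cases hk : z.1 + k ∈ B
        · rw [indicator_of_mem hk]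
          simp only [hχ, hz, hiff.mpr hk, indicator_of_mem, Pi.one_apply, one_mul]
          congr 5
          exact Prod.ext rfl (by simp)
        · rw [indicator_of_notMem hk]
          simp [hχ, mt hiff.mp hk]
      · simp [hz, hχ]
    · exact (((hχm.comp measurable_snd).mul (hχm.comp (by fun_prop))).mul
        (((hum.comp (by fun_prop)).sub (hum.comp measurable_snd)).enorm.pow_const q)).aemeasurable
  rw [hL]
  set D : Spc n × ℝ → ℝ≥0∞ := fun z => ‖Du z‖ₑ ^ q with hD
  have hDm : Measurable D := hDum.enorm.pow_const q
  calc ∫⁻ k : Spc n, ∫⁻ z, χ z * χ (z + (k, 0)) * ‖u (z + (k, 0)) - u z‖ₑ ^ q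
      ≤ ∫⁻ k : Spc n, ∫⁻ z, χ z * χ (z + (k, 0)) *
          (ENNReal.ofReal (2 * ρ) ^ q * ∫⁻ s in Ioc (0 : ℝ) 1, D (T s k z)) := by
        refine lintegral_mono fun k => lintegral_mono_ae ?_
        filter_upwards [hw.ae_enorm_sub_rpow_le hQo hQc hu hDum hDu hq k] with z hz
        by_cases h1 : z ∈ Q
        · by_cases h2 : z + (k, 0) ∈ Q
          · gcongr
            refine (hz h1 h2).trans ?_
            gcongr
            exact (hsmall z k h1 h2).1
          · simp [hχ, h2]
        · simp [hχ, h1]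
    _ = ENNReal.ofReal (2 * ρ) ^ q * ∫⁻ k : Spc n, ∫⁻ s in Ioc (0 : ℝ) 1,
          ∫⁻ z, χ z * χ (z + (k, 0)) * D (T s k z) := by
        rw [← lintegral_const_mul']
        · refine lintegral_congr fun k => ?_
          have hm : Measurable fun w : (Spc n × ℝ) × ℝ =>
              χ w.1 * χ (w.1 + (k, 0)) * D (T w.2 k w.1) :=
            ((hχm.comp measurable_fst).mul (hχm.comp (by fun_prop))).mul
              (hDm.comp (hTm measurable_snd measurable_const measurable_fst))
          rw [← lintegral_lintegral_swap hm.aemeasurable,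
            ← lintegral_const_mul' _ _ (by finiteness)]
          refine lintegral_congr fun z => ?_
          have hm' : Measurable fun s => D (T s k z) :=
            hDm.comp (hTm measurable_id measurable_const measurable_const)
          rw [lintegral_const_mul _ hm']
          ring
        · finiteness
    _ ≤ ENNReal.ofReal (2 * ρ) ^ q * ∫⁻ k : Spc n, ∫⁻ s in Ioc (0 : ℝ) 1,
          (Metric.ball (0 : Spc n) (2 * ρ)).indicator (fun _ => ∫⁻ z in Q, D z) k := by
        refine mul_le_mul_right (lintegral_mono fun k =>
          setLIntegral_mono' measurableSet_Ioc fun s hs => ?_) _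
        by_cases hk : k ∈ Metric.ball (0 : Spc n) (2 * ρ)
        · rw [indicator_of_mem hk, ← lintegral_indicator hQm,
            ← lintegral_add_right_eq_self (Q.indicator _) (s • (k, (0:ℝ)))]
          refine lintegral_mono fun z => ?_
          by_cases h1 : z ∈ Q
          · by_cases h2 : z + (k, 0) ∈ Q
            · have h3 : z + s • (k, (0:ℝ)) ∈ Q := by
                have := hQc h1 h2 (sub_nonneg.mpr hs.2) hs.1.le (by ring)
                convert this using 1; module
              rw [indicator_of_mem h3]
              simp [hχ, h1, h2, hT]
            · simp [hχ, h2]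
          · simp [hχ, h1]
        · rw [indicator_of_notMem hk, nonpos_iff_eq_zero]
          refine lintegral_eq_zero_of_ae_eq_zero (ae_of_all _ fun z => ?_)
          by_cases h1 : z ∈ Q
          · have h2 : z + (k, 0) ∉ Q := fun h2 => hk (hsmall z k h1 h2).2
            simp [hχ, h2]
          · simp [hχ, h1]
    _ = _ := by
        simp only [lintegral_const, Measure.restrict_apply_univ, Real.volume_Ioc, sub_zero,
          ENNReal.ofReal_one, mul_one]
        rw [lintegral_indicator_const Metric.isOpen_ball.measurableSet]
        ring

/-! ### Oscillation in time of weighted spatial means -/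

lemma ae_ae_enorm_sub_le_of_weakDeriv {G : Type*} [NormedAddCommGroup G] [NormedSpace ℝ G]
    [CompleteSpace G] {I : Set ℝ} (hIo : IsOpen I) (hIc : Convex ℝ I) {V H : ℝ → G}
    (hV : IntegrableOn V I) (hVm : StronglyMeasurable V) (hH : IntegrableOn H I)
    (hHm : StronglyMeasurable H)
    (hw : ∀ χ : ℝ → ℝ, ContDiff ℝ (⊤ : ℕ∞) χ → HasCompactSupport χ → tsupport χ ⊆ I →
      ∫ t in I, deriv χ t • V t = ∫ t in I, χ t • H t) :
    ∀ᵐ t ∂volume.restrict I, ∀ᵐ τ ∂volume.restrict I, ‖V τ - V t‖ₑ ≤ ∫⁻ s in I, ‖H s‖ₑ := by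
  have hIm := hIo.measurableSet
  have step : ∀ h : ℝ, ∀ᵐ t : ℝ, t ∈ I → t + h ∈ I → ‖V (t + h) - V t‖ₑ ≤ ∫⁻ s in I, ‖H s‖ₑ := by
    intro h
    rcases eq_or_ne h 0 with rfl | hne
    · simp
    have hwk : ∀ ψ : ℝ → ℝ, ContDiff ℝ (⊤ : ℕ∞) ψ → HasCompactSupport ψ → tsupport ψ ⊆ I →
        ∫ z in I, fderiv ℝ ψ z h • V z = - ∫ z in I, ψ z • (-(h • H z)) := by
      intro ψ h1 h2 h3
      have e1 : ∀ z, fderiv ℝ ψ z h • V z = h • (deriv ψ z • V z) := by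
        intro z
        rw [fderiv_eq_smul_deriv, smul_assoc]
      have e2 : ∀ z, ψ z • (-(h • H z)) = - (h • (ψ z • H z)) := by
        intro z; rw [smul_neg, smul_comm]
      simp only [e1, e2]
      rw [integral_neg, neg_neg, integral_smul, integral_smul, hw ψ h1 h2 h3]
    filter_upwards [ae_enorm_sub_le_of_weakDeriv hIo hIc hV (hH.smul h).neg
      (hHm.const_smul h).neg h hwk] with t ht h1 h2
    refine (ht h1 h2).trans ?_
    set K : ℝ → ℝ≥0∞ := I.indicator fun s => ‖H s‖ₑ with hK
    have hKm : Measurable K := hHm.enorm.indicator hIm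
    calc ∫⁻ s in Ioc (0:ℝ) 1, ‖-(h • H (t + s • h))‖ₑ
        ≤ ∫⁻ s in Ioc (0:ℝ) 1, ENNReal.ofReal |h| * K (t + h * s) := by
          refine setLIntegral_mono' measurableSet_Ioc fun s hs => ?_
          have h3 : t + h * s ∈ I := by
            have := hIc h1 h2 (sub_nonneg.mpr hs.2) hs.1.le (by ring)
            convert this using 1; simp only [smul_eq_mul]; ring
          rw [hK, indicator_of_mem h3, enorm_neg, enorm_smul, Real.enorm_eq_ofReal_abs,
            smul_eq_mul, mul_comm s h]
      _ ≤ ∫⁻ s, ENNReal.ofReal |h| * K (t + h * s) := setLIntegral_le_lintegral _ _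
      _ = ∫⁻ s, K (t + s) := by
          have hm2 : Measurable fun s => K (t + s) := hKm.comp (by fun_prop)
          have hm3 : Measurable fun s => K (t + h * s) := hKm.comp (by fun_prop)
          rw [lintegral_const_mul _ hm3]
          conv_rhs => rw [← Real.smul_map_volume_mul_left hne]
          rw [lintegral_smul_measure, lintegral_map hm2 (measurable_const_mul h), smul_eq_mul]
      _ = ∫⁻ s in I, ‖H s‖ₑ := by
          rw [lintegral_add_left_eq_self K t, lintegral_indicator hIm]
  have hmeas : MeasurableSet {w : ℝ × ℝ | w.2 ∈ I → w.2 + w.1 ∈ I →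
      ‖V (w.2 + w.1) - V w.2‖ₑ ≤ ∫⁻ s in I, ‖H s‖ₑ} := by
    have hm : Measurable fun w : ℝ × ℝ => ‖V (w.2 + w.1) - V w.2‖ₑ :=
      ((hVm.comp_measurable (by fun_prop)).sub (hVm.comp_measurable measurable_snd)).enorm
    have m1 : MeasurableSet {w : ℝ × ℝ | w.2 ∈ I} := hIm.preimage measurable_snd
    have m2 : MeasurableSet {w : ℝ × ℝ | w.2 + w.1 ∈ I} :=
      hIm.preimage (measurable_snd.add measurable_fst)
    exact m1.imp (m2.imp (measurableSet_le hm measurable_const))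
  have h2 := (Measure.ae_ae_comm (μ := volume) (ν := volume) hmeas).mp (ae_of_all _ step)
  rw [ae_restrict_iff' hIm]
  filter_upwards [h2] with t ht htI
  rw [ae_restrict_iff' hIm]
  have := (measurePreserving_sub_right volume t).quasiMeasurePreserving.ae ht
  filter_upwards [this] with τ hτ hτI
  simpa [hτI] using hτ htI

/-- The gradient of a function on `Spc n` in coordinates. -/
def coordGrad (η : Spc n → ℝ) (x : Spc n) : Spc n :=
  WithLp.toLp 2 fun j => fderiv ℝ η x (EuclideanSpace.single j 1)

lemma norm_coordGrad_le (η : Spc n → ℝ) (x : Spc n) : ‖coordGrad η x‖ ≤ ‖fderiv ℝ η x‖ := by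
  set g := coordGrad η x with hg
  have h : fderiv ℝ η x g = ‖g‖ ^ 2 := by
    have h4 : g = ∑ j, g j • EuclideanSpace.single j (1:ℝ) := by
      ext i; simp [Pi.single_apply]
    conv_lhs => rw [h4, map_sum]
    rw [EuclideanSpace.norm_sq_eq]
    refine Finset.sum_congr rfl fun j _ => ?_
    rw [map_smul, smul_eq_mul, Real.norm_eq_abs, sq_abs, sq]
    congr 1
  rcases eq_or_ne g 0 with h0 | h0
  · rw [h0, norm_zero]; positivity
  have h1 := (le_abs_self _).trans ((fderiv ℝ η x).le_opNorm g)
  have h2 : 0 < ‖g‖ := norm_pos_iff.mpr h0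
  rw [h] at h1
  nlinarith

lemma continuous_coordGrad {η : Spc n → ℝ} (hη : ContDiff ℝ (⊤ : ℕ∞) η) :
    Continuous (coordGrad η) := by
  unfold coordGrad
  have : ∀ j : Fin n, Continuous fun x => fderiv ℝ η x (EuclideanSpace.single j 1) := fun j =>
    (hη.continuous_fderiv (by simp)).clm_apply continuous_const
  fun_prop

lemma continuous_uncurry_matVec :
    Continuous fun w : Mat N n × Spc n => matVec w.1 w.2 := by
  unfold matVec; fun_prop

/-- If `∂ₜ v = div M` weakly on a cylinder, weighted spatial means of `v` oscillate in time by at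
most the total mass of `M`. -/
lemma ae_ae_enorm_integral_sub_le {B : Set (Spc n)} {I : Set ℝ} (hIo : IsOpen I)
    (hIc : Convex ℝ I) {v : Spc n × ℝ → Vec N} {M : Spc n × ℝ → Mat N n} (hvm : Measurable v)
    (hv : IntegrableOn v (B ×ˢ I)) (hMm : Measurable M) (hM : IntegrableOn M (B ×ˢ I))
    {η : Spc n → ℝ} (hη : ContDiff ℝ (⊤ : ℕ∞) η) (hηc : HasCompactSupport η) {C : ℝ}
    (hC : ∀ x, ‖fderiv ℝ η x‖ ≤ C)
    (hw : ∀ χ : ℝ → ℝ, ContDiff ℝ (⊤ : ℕ∞) χ → HasCompactSupport χ → tsupport χ ⊆ I → ∀ i,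
      ∫ z in B ×ˢ I, deriv χ z.2 * (η z.1 * v z i)
        = ∫ z in B ×ˢ I, χ z.2 * matVec (M z) (coordGrad η z.1) i) :
    ∀ᵐ t ∂volume.restrict I, ∀ᵐ τ ∂volume.restrict I,
      ‖(∫ x in B, η x • v (x, τ)) - ∫ x in B, η x • v (x, t)‖ₑ
        ≤ ENNReal.ofReal C * ∫⁻ z in B ×ˢ I, ‖M z‖ₑ := by
  have hres : (volume : Measure (Spc n × ℝ)).restrict (B ×ˢ I)
      = (volume.restrict B).prod (volume.restrict I) := by
    rw [Measure.volume_eq_prod, Measure.prod_restrict]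
  set P : Spc n × ℝ → Vec N := fun z => η z.1 • v z with hP
  set R : Spc n × ℝ → Vec N := fun z => matVec (M z) (coordGrad η z.1) with hR
  have hPm : StronglyMeasurable P :=
    ((hη.continuous.measurable.comp measurable_fst).smul hvm).stronglyMeasurable
  have hRm : StronglyMeasurable R :=
    (continuous_uncurry_matVec.measurable.comp
      (hMm.prodMk ((continuous_coordGrad hη).measurable.comp measurable_fst))).stronglyMeasurable
  obtain ⟨C', hC'⟩ := hη.continuous.bounded_above_of_compact_support hηc
  have hPi : IntegrableOn P (B ×ˢ I) :=
    Integrable.bdd_smul hv C'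
      (hη.continuous.comp continuous_fst).aestronglyMeasurable (ae_of_all _ fun z => hC' z.1)
  have hRb : ∀ z, ‖R z‖ ≤ ‖M z‖ * C := fun z =>
    (norm_matVec_le _ _).trans (by gcongr; exact (norm_coordGrad_le _ _).trans (hC _))
  have hRi : IntegrableOn R (B ×ˢ I) :=
    (hM.norm.mul_const C).mono' hRm.aestronglyMeasurable (ae_of_all _ hRb)
  have hPi' := hPi
  have hRi' := hRi
  rw [IntegrableOn, hres] at hPi' hRi'
  have key := ae_ae_enorm_sub_le_of_weakDeriv (V := fun t => ∫ x in B, P (x, t))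
    (H := fun t => ∫ x in B, R (x, t)) hIo hIc hPi'.integral_prod_right
    hPm.integral_prod_left' hRi'.integral_prod_right hRm.integral_prod_left' ?_
  · filter_upwards [key] with t ht
    filter_upwards [ht] with τ hτ
    refine hτ.trans ?_
    calc ∫⁻ s in I, ‖∫ x in B, R (x, s)‖ₑ ≤ ∫⁻ s in I, ∫⁻ x in B, ‖R (x, s)‖ₑ :=
          lintegral_mono fun s => enorm_integral_le_lintegral_enorm _
      _ = ∫⁻ z in B ×ˢ I, ‖R z‖ₑ := by
          rw [hres, lintegral_prod_symm _ hRm.enorm.aemeasurable]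
      _ ≤ ∫⁻ z in B ×ˢ I, ENNReal.ofReal C * ‖M z‖ₑ := by
          refine lintegral_mono fun z => ?_
          rw [← ofReal_norm, ← ofReal_norm, mul_comm, ← ENNReal.ofReal_mul (norm_nonneg _)]
          exact ENNReal.ofReal_le_ofReal (hRb z)
      _ = _ := lintegral_const_mul _ hMm.enorm
  · intro χ h1 h2 h3
    have hd : Continuous (deriv χ) := h1.continuous_deriv (by simp)
    obtain ⟨c₁, hc₁⟩ := h1.continuous.bounded_above_of_compact_support h2
    obtain ⟨c₂, hc₂⟩ := hd.bounded_above_of_compact_support h2.deriv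
    have i1 : IntegrableOn (fun z : Spc n × ℝ => deriv χ z.2 • P z) (B ×ˢ I) :=
      Integrable.bdd_smul hPi c₂ (hd.comp continuous_snd).aestronglyMeasurable
        (ae_of_all _ fun z => hc₂ z.2)
    have i2 : IntegrableOn (fun z : Spc n × ℝ => χ z.2 • R z) (B ×ˢ I) :=
      Integrable.bdd_smul hRi c₁ (h1.continuous.comp continuous_snd).aestronglyMeasurable
        (ae_of_all _ fun z => hc₁ z.2)
    have e : ∫ z in B ×ˢ I, deriv χ z.2 • P z = ∫ z in B ×ˢ I, χ z.2 • R z := by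
      ext i
      rw [integral_vec_apply i1, integral_vec_apply i2]
      exact hw χ h1 h2 h3 i
    simp only [← integral_smul]
    rw [IntegrableOn, hres] at i1 i2
    rw [hres, integral_prod_symm _ i1, integral_prod_symm _ i2] at e
    exact e

section WeakSolution

variable {p ν L T : ℝ} {Ω : Set (Spc n)} {A : Spc n × ℝ → Vec N → Mat N n → Mat N n}
  {F : Spc n × ℝ → Mat N n} {u : Spc n × ℝ → Vec N} {Du : Spc n × ℝ → Mat N n}

lemma WeakSolution.aemeasurable_field (h : WeakSolution p ν L T Ω A F u Du) :
    AEMeasurable (fun z => A z (u z) (Du z)) (volume.restrict (Ω ×ˢ Ioo 0 T)) := by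
  obtain ⟨S, hS, hSm, hSA⟩ := h.contA.exists_measurable_mem
  classical
  set g : Vec N × Mat N n → Spc n × ℝ → Mat N n := fun q z => S.indicator (fun z => A z q.1 q.2) z
    with hg
  have hgm : Measurable (Function.uncurry g) := by
    refine measurable_uncurry_of_continuous_of_measurable (u := g) ?_ ?_
    · intro z
      by_cases hz : z ∈ S
      · simpa [hg, hz] using hSA z hz
      · simpa [hg, hz] using continuous_const
    · intro q
      exact (h.measA q.1 q.2).indicator hSm
  refine ⟨fun z => g (u z, Du z) z, hgm.comp ((h.measu.prodMk h.measDu).prodMk measurable_id), ?_⟩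
  filter_upwards [hS] with z hz
  simp [hg, hz]

lemma WeakSolution.weakForm_tensor (h : WeakSolution p ν L T Ω A F u Du) {B : Set (Spc n)}
    {I : Set ℝ} (hBm : MeasurableSet B) (hIm : MeasurableSet I)
    (hQ : B ×ˢ I ⊆ Ω ×ˢ Ioo 0 T) (hv : IntegrableOn (fun z => pw (p - 1) (u z)) (B ×ˢ I))
    (hA : IntegrableOn (fun z => A z (u z) (Du z)) (B ×ˢ I))
    (hFi : IntegrableOn (fun z => ‖F z‖ ^ (p - 2) • F z) (B ×ˢ I))
    {η : Spc n → ℝ} (hη : ContDiff ℝ (⊤ : ℕ∞) η) (hηc : HasCompactSupport η)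
    (hηB : tsupport η ⊆ B) {χ : ℝ → ℝ} (hχ : ContDiff ℝ (⊤ : ℕ∞) χ) (hχc : HasCompactSupport χ)
    (hχI : tsupport χ ⊆ I) (i : Fin N) :
    ∫ z in B ×ˢ I, deriv χ z.2 * (η z.1 * pw (p - 1) (u z) i)
      = ∫ z in B ×ˢ I, χ z.2 *
        matVec (A z (u z) (Du z) + ‖F z‖ ^ (p - 2) • F z) (coordGrad η z.1) i := by
  set φ : Spc n × ℝ → Vec N := fun z => (χ z.2 * η z.1) • EuclideanSpace.single i (1 : ℝ) with hφ
  have hφs : ContDiff ℝ (⊤ : ℕ∞) φ :=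
    ((hχ.comp contDiff_snd).mul (hη.comp contDiff_fst)).smul contDiff_const
  have hsub : tsupport φ ⊆ tsupport η ×ˢ tsupport χ := by
    refine closure_minimal ?_ ((isClosed_tsupport η).prod (isClosed_tsupport χ))
    intro z hz
    constructor
    · refine subset_tsupport η fun h0 => hz ?_
      simp [hφ, h0]
    · refine subset_tsupport χ fun h0 => hz ?_
      simp [hφ, h0]
  have hφc : HasCompactSupport φ :=
    (hηc.isCompact.prod hχc.isCompact).of_isClosed_subset (isClosed_tsupport φ) hsub
  have hform := h.weakForm φ hφs hφc (hsub.trans ((prod_mono hηB hχI).trans hQ))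
  have ht : ∀ z, tderiv φ z = (deriv χ z.2 * η z.1) • EuclideanSpace.single i (1 : ℝ) := by
    intro z
    have h1 : HasDerivAt χ (deriv χ z.2) z.2 := (hχ.differentiable (by simp) z.2).hasDerivAt
    exact ((h1.mul_const (η z.1)).smul_const _).deriv
  have hpd : ∀ (k : Fin N) (j : Fin n) z, pderivS j (fun w => φ w k) z
      = if k = i then χ z.2 * coordGrad η z.1 j else 0 := by
    intro k j z
    have h1 : HasFDerivAt η (fderiv ℝ η z.1) z.1 :=
      (hη.differentiable (by simp) z.1).hasFDerivAt
    have h2 : (fun y : Spc n => φ (y, z.2) k) = fun y => (if k = i then χ z.2 else 0) * η y := by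
      ext y; by_cases hk : k = i <;> simp [hφ, hk]
    rw [pderivS, h2, (h1.const_mul _).fderiv]
    by_cases hk : k = i <;> simp [hk, coordGrad]
  have hg : ∀ (M : Spc n × ℝ → Mat N n) z,
      gradPair M φ z = χ z.2 * matVec (M z) (coordGrad η z.1) i := by
    intro M z
    simp only [gradPair, hpd, matVec_apply]
    rw [Finset.sum_eq_single i]
    · rw [Finset.mul_sum]
      exact Finset.sum_congr rfl fun j _ => by simp; ring
    · intro k _ hk; simp [hk]
    · simp
  have hin : ∀ z, ‖u z‖ ^ (p - 2) * (inner ℝ (u z) (tderiv φ z) : ℝ)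
      = deriv χ z.2 * (η z.1 * pw (p - 1) (u z) i) := by
    intro z
    rw [ht, inner_smul_right, EuclideanSpace.inner_single_right, pw,
      show p - 1 - 1 = p - 2 by ring]
    simp; ring
  have hF : ∀ z, ‖F z‖ ^ (p - 2) * gradPair F φ z
      = χ z.2 * matVec (‖F z‖ ^ (p - 2) • F z) (coordGrad η z.1) i := by
    intro z
    rw [hg, matVec_apply, matVec_apply, Finset.mul_sum, Finset.mul_sum, Finset.mul_sum]
    exact Finset.sum_congr rfl fun j _ => by simp; ring
  simp only [hin, hF] at hform
  simp only [hg] at hform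
  have hadd : ∀ z, matVec (A z (u z) (Du z) + ‖F z‖ ^ (p - 2) • F z) (coordGrad η z.1) i
      = matVec (A z (u z) (Du z)) (coordGrad η z.1) i
        + matVec (‖F z‖ ^ (p - 2) • F z) (coordGrad η z.1) i := by
    intro z
    simp [matVec_apply, add_mul, Finset.sum_add_distrib]
  have hout : ∀ z ∉ B ×ˢ I, (η z.1 = 0 ∧ coordGrad η z.1 = 0) ∨ (χ z.2 = 0 ∧ deriv χ z.2 = 0) := by
    intro z hz
    by_cases h1 : z.1 ∈ tsupport η
    · have h2 : z.2 ∉ tsupport χ := fun h2 => hz ⟨hηB h1, hχI h2⟩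
      refine Or.inr ⟨image_eq_zero_of_notMem_tsupport h2, ?_⟩
      exact image_eq_zero_of_notMem_tsupport fun h3 => h2 (tsupport_deriv_subset h3)
    · refine Or.inl ⟨image_eq_zero_of_notMem_tsupport h1, ?_⟩
      have h3 : fderiv ℝ η z.1 = 0 :=
        image_eq_zero_of_notMem_tsupport fun h3 => h1 (tsupport_fderiv_subset ℝ h3)
      ext j; simp [coordGrad, h3]
  have hzero : ∀ (M : Mat N n) , matVec M (0 : Spc n) = 0 := by
    intro M; ext k; simp [matVec_apply]
  have hQm := hBm.prod hIm
  have hΩm := (h.openΩ.prod (isOpen_Ioo (a := (0:ℝ)) (b := T))).measurableSet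
  rw [setIntegral_eq_of_subset_of_forall_sdiff_eq_zero hΩm hQ,
    setIntegral_eq_of_subset_of_forall_sdiff_eq_zero hΩm hQ] at hform
  rotate_left
  · intro z hz
    rcases hout z hz.2 with ⟨h1, h2⟩ | ⟨h1, h2⟩ <;> simp [h1, h2, hzero]
  · intro z hz
    rcases hout z hz.2 with ⟨h1, h2⟩ | ⟨h1, h2⟩ <;> simp [h1, h2, hzero]
  have hd : Continuous (deriv χ) := hχ.continuous_deriv (by simp)
  obtain ⟨c₁, hc₁⟩ := hχ.continuous.bounded_above_of_compact_support hχc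
  obtain ⟨c₂, hc₂⟩ := hd.bounded_above_of_compact_support hχc.deriv
  obtain ⟨c₃, hc₃⟩ := hη.continuous.bounded_above_of_compact_support hηc
  have hcg : HasCompactSupport (coordGrad η) := by
    refine hηc.mono' fun x hx => ?_
    by_contra h1
    refine hx ?_
    have h3 : fderiv ℝ η x = 0 :=
      image_eq_zero_of_notMem_tsupport fun h3 => h1 (tsupport_fderiv_subset ℝ h3)
    ext j; simp [coordGrad, h3]
  obtain ⟨c₄, hc₄⟩ := (continuous_coordGrad hη).bounded_above_of_compact_support hcg
  have iM : ∀ M : Spc n × ℝ → Mat N n, IntegrableOn M (B ×ˢ I) →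
      IntegrableOn (fun z => χ z.2 * matVec (M z) (coordGrad η z.1) i) (B ×ˢ I) := by
    intro M hM
    have h1 : IntegrableOn (fun z => matVec (M z) (coordGrad η z.1)) (B ×ˢ I) := by
      refine (hM.norm.mul_const c₄).mono' ?_ (ae_of_all _ fun z => (norm_matVec_le _ _).trans ?_)
      · exact continuous_uncurry_matVec.comp_aestronglyMeasurable
          (hM.aestronglyMeasurable.prodMk
            ((continuous_coordGrad hη).comp continuous_fst).aestronglyMeasurable)
      · gcongr; exact hc₄ _
    exact Integrable.bdd_mul (c := c₁) ((EuclideanSpace.proj (𝕜 := ℝ) i).integrable_comp h1)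
      (hχ.continuous.comp continuous_snd).aestronglyMeasurable (ae_of_all _ fun z => hc₁ z.2)
  have iv : IntegrableOn (fun z => deriv χ z.2 * (η z.1 * pw (p - 1) (u z) i)) (B ×ˢ I) :=
    Integrable.bdd_mul (c := c₂) (Integrable.bdd_mul (c := c₃)
      ((EuclideanSpace.proj (𝕜 := ℝ) i).integrable_comp hv)
      (hη.continuous.comp continuous_fst).aestronglyMeasurable (ae_of_all _ fun z => hc₃ z.1))
      (hd.comp continuous_snd).aestronglyMeasurable (ae_of_all _ fun z => hc₂ z.2)
  rw [integral_sub iv (iM _ hA), sub_eq_iff_eq_add] at hform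
  rw [hform, ← integral_add (iM _ hFi) (iM _ hA)]
  refine integral_congr_ae (ae_of_all _ fun z => ?_)
  simp only [hadd]; ring

lemma WeakSolution.volume_lt_top (h : WeakSolution p ν L T Ω A F u Du) :
    volume (Ω ×ˢ Ioo (0 : ℝ) T) < ∞ :=
  (h.bddΩ.prod (Metric.isBounded_Ioo 0 T)).measure_lt_top

lemma integrable_of_norm_le_rpow_sub_one {X E G : Type*} [MeasurableSpace X] {μ : Measure X}
    [IsFiniteMeasure μ] [NormedAddCommGroup E] [NormedAddCommGroup G] (hp : 1 < p) {w : X → E}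
    (hw : MemLp w (ENNReal.ofReal p) μ) {f : X → G} (hf : AEStronglyMeasurable f μ) {c : ℝ}
    (hc : 0 ≤ c) (hfw : ∀ᵐ x ∂μ, ‖f x‖ ≤ c * ‖w x‖ ^ (p - 1)) : Integrable f μ := by
  have h1 := hw.integrable_norm_rpow (by simp; linarith) (by simp)
  rw [ENNReal.toReal_ofReal (by linarith)] at h1
  refine (((integrable_const (1 : ℝ)).add h1).const_mul c).mono' hf ?_
  filter_upwards [hfw] with x hx
  refine hx.trans (mul_le_mul_of_nonneg_left ?_ hc)
  simp only [Pi.add_apply]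
  rcases le_total ‖w x‖ 1 with h2 | h2
  · have := Real.rpow_le_one (norm_nonneg (w x)) h2 (z := p - 1) (by linarith)
    have := Real.rpow_nonneg (norm_nonneg (w x)) p
    linarith
  · have := Real.rpow_le_rpow_of_exponent_le h2 (show p - 1 ≤ p by linarith)
    linarith

lemma norm_rpow_smul_self {E : Type*} [NormedAddCommGroup E] [NormedSpace ℝ E] (hp : 1 < p)
    (x : E) : ‖‖x‖ ^ (p - 2) • x‖ = ‖x‖ ^ (p - 1) := by
  rw [norm_smul, Real.norm_of_nonneg (by positivity)]
  rcases eq_or_ne x 0 with rfl | hx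
  · simp [Real.zero_rpow (show p - 1 ≠ 0 by linarith)]
  · have : 0 < ‖x‖ := norm_pos_iff.mpr hx
    nth_rewrite 2 [← Real.rpow_one ‖x‖]
    rw [← Real.rpow_add this]; congr 1; ring

/-- Gluing lemma: weighted spatial means of `|u|^{p-2}u` at two times are close. -/
lemma WeakSolution.ae_ae_enorm_mean_sub_le (h : WeakSolution p ν L T Ω A F u Du) (hp : 1 < p)
    {B : Set (Spc n)} {I : Set ℝ} (hBm : MeasurableSet B) (hIo : IsOpen I) (hIc : Convex ℝ I)
    (hQ : B ×ˢ I ⊆ Ω ×ˢ Ioo 0 T) {η : Spc n → ℝ} (hη : ContDiff ℝ (⊤ : ℕ∞) η)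
    (hηc : HasCompactSupport η) (hηB : tsupport η ⊆ B) {C : ℝ}
    (hC : ∀ x, ‖fderiv ℝ η x‖ ≤ C) :
    ∀ᵐ t ∂volume.restrict I, ∀ᵐ τ ∂volume.restrict I,
      ‖(∫ x in B, η x • pw (p - 1) (u (x, τ))) - ∫ x in B, η x • pw (p - 1) (u (x, t))‖ₑ
        ≤ ENNReal.ofReal C * ∫⁻ z in B ×ˢ I,
          (ENNReal.ofReal L * ‖Du z‖ₑ ^ (p - 1) + ‖F z‖ₑ ^ (p - 1)) := by
  have hle : volume.restrict (B ×ˢ I) ≤ volume.restrict (Ω ×ˢ Ioo (0 : ℝ) T) :=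
    Measure.restrict_mono hQ le_rfl
  have : IsFiniteMeasure (volume.restrict (B ×ˢ I)) :=
    ⟨by simpa using (measure_mono hQ).trans_lt h.volume_lt_top⟩
  have hL : 0 ≤ L := h.hν.le.trans h.hνL
  have hv : IntegrableOn (fun z => pw (p - 1) (u z)) (B ×ˢ I) :=
    integrable_of_norm_le_rpow_sub_one hp (h.memLp_u.mono_measure hle)
      ((measurable_pw _).comp h.measu).aestronglyMeasurable zero_le_one
      (ae_of_all _ fun z => by rw [norm_pw (by linarith), one_mul])
  have hgr := ae_mono hle h.growth
  have hA : IntegrableOn (fun z => A z (u z) (Du z)) (B ×ˢ I) :=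
    integrable_of_norm_le_rpow_sub_one hp (h.memLp_Du.mono_measure hle)
      (h.aemeasurable_field.mono_measure hle).aestronglyMeasurable hL
      (by filter_upwards [hgr] with z hz using hz _ _)
  have hFm : Measurable fun z => ‖F z‖ ^ (p - 2) • F z := (h.measF.norm.pow_const _).smul h.measF
  have hF : IntegrableOn (fun z => ‖F z‖ ^ (p - 2) • F z) (B ×ˢ I) :=
    integrable_of_norm_le_rpow_sub_one hp (h.memLp_F.mono_measure hle)
      hFm.aestronglyMeasurable zero_le_one
      (ae_of_all _ fun z => by rw [norm_rpow_smul_self hp, one_mul])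
  obtain ⟨M, hMm, hMe⟩ := (hA.add hF).aemeasurable
  refine (ae_ae_enorm_integral_sub_le hIo hIc ((measurable_pw _).comp h.measu) hv hMm
    ((hA.add hF).congr hMe) hη hηc hC ?_).mono fun t ht => ht.mono fun τ hτ => hτ.trans ?_
  · intro χ h1 h2 h3 i
    refine (h.weakForm_tensor hBm hIo.measurableSet hQ hv hA hF hη hηc hηB h1 h2 h3 i).trans
      (integral_congr_ae ?_)
    filter_upwards [hMe] with z hz
    rw [← hz]; rfl
  · gcongr ENNReal.ofReal C * ?_
    refine lintegral_mono_ae ?_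
    filter_upwards [hMe, hgr] with z hz hg
    rw [← hz]
    refine (enorm_add_le _ _).trans (add_le_add ?_ ?_)
    · rw [← ofReal_norm, ← ofReal_norm, ENNReal.ofReal_rpow_of_nonneg (norm_nonneg _) (by linarith),
        ← ENNReal.ofReal_mul hL]
      exact ENNReal.ofReal_le_ofReal (hg _ _)
    · rw [← ofReal_norm, ← ofReal_norm, ENNReal.ofReal_rpow_of_nonneg (norm_nonneg _) (by linarith),
        norm_rpow_smul_self hp]

end WeakSolution

/-! ### Combining the estimates in space and time -/

/-- The constant comparing a nonlinear mean with the linear one. -/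
def pwMeanConst (α : ℝ) : ℝ := 1 / α * 2 ^ (1 / α - 1) * (2 + 4 ^ (1 / α))

lemma one_le_pwMeanConst {α : ℝ} (h0 : 0 < α) (h1 : α ≤ 1) : 1 ≤ pwMeanConst α := by
  have hβ : 1 ≤ 1 / α := one_le_one_div h0 h1
  have h2 : (1 : ℝ) ≤ 2 ^ (1 / α - 1) := Real.one_le_rpow (by norm_num) (by linarith)
  have h3 : (0 : ℝ) ≤ 4 ^ (1 / α) := by positivity
  unfold pwMeanConst
  have h4 : 1 ≤ 1 / α * 2 ^ (1 / α - 1) := one_le_mul_of_one_le_of_one_le hβ h2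
  exact one_le_mul_of_one_le_of_one_le h4 (by linarith)

/-- Algebraic core of the comparison of nonlinear and linear means. -/
lemma norm_pw_sub_le_of_close {α : ℝ} (h0 : 0 < α) (h1 : α ≤ 1) {V b : Vec N} {J : ℝ}
    (hJ : 0 ≤ J) (hlin : ‖b‖ ^ (1 - α) * ‖V - pw α b‖ ≤ 2 * J)
    (hpow : ‖V - pw α b‖ ≤ 4 * J ^ α) : ‖pw (1 / α) V - b‖ ≤ pwMeanConst α * J := by
  have hβ : 1 ≤ 1 / α := one_le_one_div h0 h1
  have hαβ : α * (1 / α) = 1 := mul_one_div_cancel h0.ne'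
  set β := 1 / α with hβd
  set B := pw α b with hB
  set δ := ‖V - B‖ with hδ
  have hδ0 : 0 ≤ δ := norm_nonneg _
  have hBn : ‖B‖ = ‖b‖ ^ α := norm_pw h0 b
  have e : ‖B‖ ^ (β - 1) = ‖b‖ ^ (1 - α) := by
    rw [hBn, ← Real.rpow_mul (norm_nonneg _)]; congr 1; linarith
  have hmax : max ‖V‖ ‖B‖ ≤ 2 * max ‖B‖ δ := by
    have h2 : ‖V‖ ≤ δ + ‖B‖ := by
      calc ‖V‖ = ‖(V - B) + B‖ := by rw [sub_add_cancel]
        _ ≤ _ := norm_add_le _ _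
    have h3 := le_max_left ‖B‖ δ
    have h4 := le_max_right ‖B‖ δ
    refine max_le (by linarith) ?_
    linarith [norm_nonneg B]
  have hmx : (max ‖B‖ δ) ^ (β - 1) ≤ ‖B‖ ^ (β - 1) + δ ^ (β - 1) := by
    have h5 : 0 ≤ ‖B‖ ^ (β - 1) := by positivity
    have h6 : 0 ≤ δ ^ (β - 1) := by positivity
    rcases max_choice ‖B‖ δ with h | h <;> rw [h] <;> linarith
  have hδβ : δ ^ (β - 1) * δ ≤ 4 ^ β * J := by
    calc δ ^ (β - 1) * δ = δ ^ β := by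
          rw [← Real.rpow_add_one' hδ0 (by linarith)]; congr 1; ring
      _ ≤ (4 * J ^ α) ^ β := Real.rpow_le_rpow hδ0 hpow (by linarith)
      _ = 4 ^ β * J := by
          rw [Real.mul_rpow (by norm_num) (by positivity), ← Real.rpow_mul hJ, hαβ, Real.rpow_one]
  calc ‖pw β V - b‖ = ‖pw β V - pw β B‖ := by rw [hB, pw_pw h0 hαβ]
    _ ≤ β * (max ‖V‖ ‖B‖ ^ (β - 1) * δ) := norm_pw_sub_le_mul hβ _ _
    _ ≤ β * ((2 * max ‖B‖ δ) ^ (β - 1) * δ) := by gcongr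
    _ = β * (2 ^ (β - 1) * (max ‖B‖ δ ^ (β - 1) * δ)) := by
        rw [Real.mul_rpow (by norm_num) (by positivity)]; ring
    _ ≤ β * (2 ^ (β - 1) * ((‖B‖ ^ (β - 1) + δ ^ (β - 1)) * δ)) := by gcongr
    _ ≤ β * (2 ^ (β - 1) * ((2 + 4 ^ β) * J)) := by
        have : (‖B‖ ^ (β - 1) + δ ^ (β - 1)) * δ ≤ (2 + 4 ^ β) * J := by
          rw [add_mul, add_mul, e]
          exact add_le_add hlin hδβ
        gcongr
    _ = pwMeanConst α * J := by rw [pwMeanConst]; ring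

lemma enorm_pw_integral_sub_le {X : Type*} [MeasurableSpace X] {W : Measure X}
    [IsProbabilityMeasure W] {α : ℝ} (h0 : 0 < α) (h1 : α ≤ 1) {f : X → Vec N}
    (hf : Measurable f) (b : Vec N) :
    ‖pw (1 / α) (∫ y, pw α (f y) ∂W) - b‖ₑ
      ≤ ENNReal.ofReal (pwMeanConst α) * ∫⁻ y, ‖f y - b‖ₑ ∂W := by
  have hC := one_le_pwMeanConst h0 h1
  set Jₑ := ∫⁻ y, ‖f y - b‖ₑ ∂W with hJₑ
  rcases eq_or_ne Jₑ ∞ with hJ | hJ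
  · rw [hJ, ENNReal.mul_top (by simpa using by linarith)]; exact le_top
  have hpm : Measurable fun y => pw α (f y) := (measurable_pw α).comp hf
  have hdm : Measurable fun y => ‖f y - b‖ₑ := (hf.sub_const b).enorm
  have hpow : ∫⁻ y, ‖pw α (f y) - pw α b‖ₑ ∂W ≤ 4 * Jₑ ^ α := by
    calc ∫⁻ y, ‖pw α (f y) - pw α b‖ₑ ∂W ≤ ∫⁻ y, 4 * ‖f y - b‖ₑ ^ α ∂W := by
          refine lintegral_mono fun y => ?_
          have := norm_pw_sub_le h0 h1 (f y) b
          rw [← ofReal_norm, ← ofReal_norm, ENNReal.ofReal_rpow_of_nonneg (norm_nonneg _) h0.le]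
          refine (ENNReal.ofReal_le_ofReal this).trans_eq ?_
          rw [ENNReal.ofReal_mul (by norm_num)]; norm_num
      _ = 4 * ∫⁻ y, ‖f y - b‖ₑ ^ α ∂W := lintegral_const_mul _ (hdm.pow_const α)
      _ ≤ _ := by gcongr; exact lintegral_rpow_le_rpow_lintegral h0.le h1 hdm.aemeasurable
  have hpi : Integrable (fun y => pw α (f y) - pw α b) W := by
    refine ⟨(hpm.sub_const _).aestronglyMeasurable, hpow.trans_lt ?_⟩
    have : Jₑ ^ α < ∞ := ENNReal.rpow_lt_top_of_nonneg h0.le hJ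
    finiteness
  have hpi' : Integrable (fun y => pw α (f y)) W := by
    have := hpi.add (integrable_const (pw α b))
    refine this.congr (ae_of_all _ fun y => ?_)
    simp
  have hV : (∫ y, pw α (f y) ∂W) - pw α b = ∫ y, (pw α (f y) - pw α b) ∂W := by
    rw [integral_sub hpi' (integrable_const _)]; simp
  have hδ : ‖(∫ y, pw α (f y) ∂W) - pw α b‖ₑ ≤ ∫⁻ y, ‖pw α (f y) - pw α b‖ₑ ∂W := by
    rw [hV]; exact enorm_integral_le_lintegral_enorm _
  have hlin : ‖b‖ₑ ^ (1 - α) * ‖(∫ y, pw α (f y) ∂W) - pw α b‖ₑ ≤ 2 * Jₑ := by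
    calc ‖b‖ₑ ^ (1 - α) * ‖(∫ y, pw α (f y) ∂W) - pw α b‖ₑ
        ≤ ‖b‖ₑ ^ (1 - α) * ∫⁻ y, ‖pw α (f y) - pw α b‖ₑ ∂W := by gcongr
      _ = ∫⁻ y, ‖b‖ₑ ^ (1 - α) * ‖pw α (f y) - pw α b‖ₑ ∂W :=
          (lintegral_const_mul _ (hpm.sub_const _).enorm).symm
      _ ≤ ∫⁻ y, 2 * ‖f y - b‖ₑ ∂W := by
          refine lintegral_mono fun y => ?_
          rw [← ofReal_norm, ← ofReal_norm, ← ofReal_norm,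
            ENNReal.ofReal_rpow_of_nonneg (norm_nonneg _) (by linarith),
            ← ENNReal.ofReal_mul (by positivity)]
          refine (ENNReal.ofReal_le_ofReal ((?_ : _ ≤ _).trans
            (max_rpow_mul_norm_pw_sub_le h0 h1 (f y) b))).trans_eq ?_
          · have : ‖b‖ ^ (1 - α) ≤ max ‖f y‖ ‖b‖ ^ (1 - α) :=
              Real.rpow_le_rpow (norm_nonneg _) (le_max_right _ _) (by linarith)
            gcongr
          · rw [ENNReal.ofReal_mul (by norm_num)]; norm_num
      _ = 2 * Jₑ := lintegral_const_mul _ hdm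
  have hJr : Jₑ = ENNReal.ofReal Jₑ.toReal := (ENNReal.ofReal_toReal hJ).symm
  set J := Jₑ.toReal
  have hJ0 : 0 ≤ J := ENNReal.toReal_nonneg
  have hmain := norm_pw_sub_le_of_close h0 h1 (V := ∫ y, pw α (f y) ∂W) (b := b) hJ0 ?_ ?_
  · rw [hJr, ← ofReal_norm, ← ENNReal.ofReal_mul (by linarith)]
    exact ENNReal.ofReal_le_ofReal hmain
  · have e2 : 2 * ENNReal.ofReal J = ENNReal.ofReal (2 * J) := by
      rw [ENNReal.ofReal_mul (by norm_num)]; norm_num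
    rw [hJr, ← ofReal_norm, ← ofReal_norm,
      ENNReal.ofReal_rpow_of_nonneg (norm_nonneg _) (by linarith),
      ← ENNReal.ofReal_mul (by positivity), e2] at hlin
    exact (ENNReal.ofReal_le_ofReal_iff (by positivity)).mp hlin
  · have := hδ.trans hpow
    rw [hJr, ← ofReal_norm, ENNReal.ofReal_rpow_of_nonneg hJ0 h0.le,
      ← ENNReal.ofReal_ofNat 4, ← ENNReal.ofReal_mul (by norm_num)] at this
    exact (ENNReal.ofReal_le_ofReal_iff (by positivity)).mp this

lemma ENNReal.add_rpow_le_two_mul {q : ℝ} (h1 : 1 ≤ q) (h2 : q ≤ 2) (a b : ℝ≥0∞) :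
    (a + b) ^ q ≤ 2 * (a ^ q + b ^ q) := by
  refine (ENNReal.rpow_add_le_mul_rpow_add_rpow a b h1).trans ?_
  gcongr
  calc (2 : ℝ≥0∞) ^ (q - 1) ≤ 2 ^ (1 : ℝ) :=
        ENNReal.rpow_le_rpow_of_exponent_le (by norm_num) (by linarith)
    _ = 2 := ENNReal.rpow_one 2

lemma enorm_pw_sub_le_mul {β : ℝ} (hβ : 1 ≤ β) (x y : Vec N) :
    ‖pw β x - pw β y‖ₑ
      ≤ ENNReal.ofReal β * ((‖x‖ₑ ^ (β - 1) + ‖y‖ₑ ^ (β - 1)) * ‖x - y‖ₑ) := by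
  have hβ' : 0 ≤ β - 1 := by linarith
  have hx : 0 ≤ ‖x‖ ^ (β - 1) := by positivity
  have hy : 0 ≤ ‖y‖ ^ (β - 1) := by positivity
  have h : ‖pw β x - pw β y‖ ≤ β * ((‖x‖ ^ (β - 1) + ‖y‖ ^ (β - 1)) * ‖x - y‖) := by
    refine (norm_pw_sub_le_mul hβ x y).trans ?_
    have : max ‖x‖ ‖y‖ ^ (β - 1) ≤ ‖x‖ ^ (β - 1) + ‖y‖ ^ (β - 1) := by
      rcases max_choice ‖x‖ ‖y‖ with h | h <;> rw [h] <;> linarith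
    gcongr
  simp only [← ofReal_norm]
  rw [ENNReal.ofReal_rpow_of_nonneg (norm_nonneg _) hβ',
    ENNReal.ofReal_rpow_of_nonneg (norm_nonneg _) hβ', ← ENNReal.ofReal_add hx hy,
    ← ENNReal.ofReal_mul (by positivity), ← ENNReal.ofReal_mul (by linarith)]
  exact ENNReal.ofReal_le_ofReal h

section Combination

variable {X Y : Type*} [MeasurableSpace X] [MeasurableSpace Y] {P W : Measure X} {S : Measure Y}
  [IsProbabilityMeasure W] {κ : ℝ≥0∞} {u : X × Y → Vec N} {p q : ℝ}

lemma enorm_pw_integral_rpow_le (hp : 1 < p) (hp2 : p ≤ 2) (hq : 1 ≤ q)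
    (hW : W ≤ κ • P) {f : X → Vec N} (hf : Measurable f) :
    (‖∫ y, pw (p - 1) (f y) ∂W‖ₑ ^ (1 / (p - 1) - 1)) ^ q
      ≤ (κ * ∫⁻ y, ‖f y‖ₑ ^ p ∂P) ^ (q * (2 - p) / p) := by
  have hα : 0 < p - 1 := by linarith
  have hβ : 0 ≤ 1 / (p - 1) - 1 := by
    have := one_le_one_div hα (by linarith); linarith
  have h1 : ‖∫ y, pw (p - 1) (f y) ∂W‖ₑ ≤ (∫⁻ y, ‖f y‖ₑ ^ p ∂W) ^ ((p - 1) / p) := by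
    refine (enorm_integral_le_lintegral_enorm _).trans ?_
    refine le_trans (le_of_eq (lintegral_congr fun y => ?_)) (lintegral_rpow_le_rpow_lintegral
      (θ := (p - 1) / p) (by positivity) (div_le_one_of_le₀ (by linarith) (by linarith))
      (hf.enorm.pow_const p).aemeasurable)
    rw [← ENNReal.rpow_mul, mul_div_cancel₀ _ (by linarith), ← ofReal_norm, norm_pw hα,
      ← ofReal_norm, ENNReal.ofReal_rpow_of_nonneg (norm_nonneg _) hα.le]
  have hθ : 0 ≤ q * (2 - p) / p :=
    div_nonneg (mul_nonneg (by linarith) (by linarith)) (by linarith)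
  calc (‖∫ y, pw (p - 1) (f y) ∂W‖ₑ ^ (1 / (p - 1) - 1)) ^ q
      ≤ (((∫⁻ y, ‖f y‖ₑ ^ p ∂W) ^ ((p - 1) / p)) ^ (1 / (p - 1) - 1)) ^ q := by
        gcongr
    _ = (∫⁻ y, ‖f y‖ₑ ^ p ∂W) ^ (q * (2 - p) / p) := by
        rw [← ENNReal.rpow_mul, ← ENNReal.rpow_mul]
        congr 1
        field_simp
        ring
    _ ≤ _ := by
        refine ENNReal.rpow_le_rpow ?_ hθ
        refine (lintegral_mono' hW le_rfl).trans_eq ?_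
        rw [lintegral_smul_measure, smul_eq_mul]

/-- A nonlinear parabolic Poincaré-type inequality on a product of probability spaces: spatial
differences and the oscillation in time of a nonlinear weighted mean control all differences. -/
theorem lintegral_lintegral_enorm_sub_rpow_le [IsProbabilityMeasure P] [IsProbabilityMeasure S]
    (hp : 1 < p) (hp2 : p ≤ 2) (hq : 1 ≤ q)
    (hqp : q ≤ p) (hW : W ≤ κ • P) (hu : Measurable u) {Γ : ℝ≥0∞}
    (hΓ : ∀ᵐ t ∂S, ∀ᵐ τ ∂S,
      ‖(∫ y, pw (p - 1) (u (y, τ)) ∂W) - ∫ y, pw (p - 1) (u (y, t)) ∂W‖ₑ ≤ Γ) :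
    ∫⁻ z, ∫⁻ w, ‖u z - u w‖ₑ ^ q ∂(P.prod S) ∂(P.prod S)
      ≤ 8 * (ENNReal.ofReal (pwMeanConst (p - 1)) ^ q * κ
          * ∫⁻ z, ∫⁻ y, ‖u (y, z.2) - u z‖ₑ ^ q ∂P ∂(P.prod S))
        + 8 * (ENNReal.ofReal (1 / (p - 1)) ^ q * Γ ^ q
          * (κ * ∫⁻ z, ‖u z‖ₑ ^ p ∂(P.prod S)) ^ (q * (2 - p) / p)) := by
  have hα : 0 < p - 1 := by linarith
  have hα1 : p - 1 ≤ 1 := by linarith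
  have hq0 : 0 ≤ q := by linarith
  have hq2 : q ≤ 2 := by linarith
  have hβ := one_le_one_div hα hα1
  set C := ENNReal.ofReal (pwMeanConst (p - 1)) with hC
  set θ := q * (2 - p) / p with hθ
  have hθ0 : 0 ≤ θ := div_nonneg (mul_nonneg (by linarith) (by linarith)) (by linarith)
  have hθ1 : θ ≤ 1 := by
    refine div_le_one_of_le₀ ?_ (by linarith)
    nlinarith
  set V : Y → Vec N := fun t => ∫ y, pw (p - 1) (u (y, t)) ∂W with hV
  set a : Y → Vec N := fun t => pw (1 / (p - 1)) (V t) with ha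
  have hVm : Measurable V :=
    (((measurable_pw (p - 1)).comp hu).stronglyMeasurable.integral_prod_left').measurable
  have ham : Measurable a := (measurable_pw _).comp hVm
  have hdm : Measurable fun z : X × Y => ‖u z - a z.2‖ₑ ^ q :=
    (hu.sub (ham.comp measurable_snd)).enorm.pow_const q
  have hum : Measurable fun z : X × Y => ‖u z‖ₑ ^ p := hu.enorm.pow_const p
  have hsec : ∀ t, Measurable fun y => u (y, t) := fun t => hu.comp (by fun_prop)
  have hspace : ∫⁻ z, ‖u z - a z.2‖ₑ ^ q ∂(P.prod S)
      ≤ C ^ q * κ * ∫⁻ z, ∫⁻ y, ‖u (y, z.2) - u z‖ₑ ^ q ∂P ∂(P.prod S) := by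
    have hm1 : Measurable fun w : (X × Y) × X => ‖u (w.2, w.1.2) - u w.1‖ₑ ^ q :=
      ((hu.comp (by fun_prop)).sub (hu.comp measurable_fst)).enorm.pow_const q
    rw [← lintegral_const_mul _ hm1.lintegral_prod_right']
    refine lintegral_mono fun z => ?_
    have hm2 : Measurable fun y => ‖u (y, z.2) - u z‖ₑ := ((hsec z.2).sub_const _).enorm
    calc ‖u z - a z.2‖ₑ ^ q = ‖a z.2 - u z‖ₑ ^ q := by rw [← enorm_neg, neg_sub]
      _ ≤ (C * ∫⁻ y, ‖u (y, z.2) - u z‖ₑ ∂W) ^ q :=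
          ENNReal.rpow_le_rpow (enorm_pw_integral_sub_le hα hα1 (hsec z.2) (u z)) hq0
      _ = C ^ q * (∫⁻ y, ‖u (y, z.2) - u z‖ₑ ∂W) ^ q := ENNReal.mul_rpow_of_nonneg _ _ hq0
      _ ≤ C ^ q * ∫⁻ y, ‖u (y, z.2) - u z‖ₑ ^ q ∂W := by
          gcongr
          exact rpow_lintegral_le_lintegral_rpow hq hm2.aemeasurable
      _ ≤ C ^ q * ∫⁻ y, ‖u (y, z.2) - u z‖ₑ ^ q ∂(κ • P) := by
          gcongr
      _ = C ^ q * κ * ∫⁻ y, ‖u (y, z.2) - u z‖ₑ ^ q ∂P := by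
          rw [lintegral_smul_measure, smul_eq_mul, mul_assoc]
  set E : Y → ℝ≥0∞ := fun t => (κ * ∫⁻ y, ‖u (y, t)‖ₑ ^ p ∂P) ^ θ with hE
  have hEm0 : Measurable fun t => κ * ∫⁻ y, ‖u (y, t)‖ₑ ^ p ∂P :=
    hum.lintegral_prod_left'.const_mul κ
  have hEm : Measurable E := hEm0.pow_const θ
  have hEint : ∫⁻ t, E t ∂S ≤ (κ * ∫⁻ z, ‖u z‖ₑ ^ p ∂(P.prod S)) ^ θ := by
    refine (lintegral_rpow_le_rpow_lintegral hθ0 hθ1 hEm0.aemeasurable).trans_eq ?_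
    rw [lintegral_const_mul _ hum.lintegral_prod_left', lintegral_prod_symm _ hum.aemeasurable]
  set b := ENNReal.ofReal (1 / (p - 1)) with hb
  have htime : ∀ᵐ t ∂S, ∀ᵐ τ ∂S, ‖a t - a τ‖ₑ ^ q ≤ b ^ q * Γ ^ q * (2 * (E t + E τ)) := by
    filter_upwards [hΓ] with t ht
    filter_upwards [ht] with τ hτ
    calc ‖a t - a τ‖ₑ ^ q
        ≤ (b * ((‖V t‖ₑ ^ (1 / (p - 1) - 1) + ‖V τ‖ₑ ^ (1 / (p - 1) - 1)) * Γ)) ^ q := by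
          refine ENNReal.rpow_le_rpow ((enorm_pw_sub_le_mul hβ _ _).trans ?_) hq0
          gcongr
          rw [← enorm_neg, neg_sub]; exact hτ
      _ = b ^ q * Γ ^ q * (‖V t‖ₑ ^ (1 / (p - 1) - 1) + ‖V τ‖ₑ ^ (1 / (p - 1) - 1)) ^ q := by
          rw [ENNReal.mul_rpow_of_nonneg _ _ hq0, ENNReal.mul_rpow_of_nonneg _ _ hq0]; ring
      _ ≤ b ^ q * Γ ^ q * (2 * (E t + E τ)) := by
          gcongr
          refine (ENNReal.add_rpow_le_two_mul hq hq2 _ _).trans ?_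
          gcongr
          · exact enorm_pw_integral_rpow_le hp hp2 hq hW (hsec t)
          · exact enorm_pw_integral_rpow_le hp hp2 hq hW (hsec τ)
  have hsnd : Measure.QuasiMeasurePreserving (Prod.snd : X × Y → Y) (P.prod S) S :=
    measurePreserving_snd.quasiMeasurePreserving
  have hpt : ∀ z : X × Y, ∀ w : X × Y, ‖u z - u w‖ₑ ^ q
      ≤ 4 * (‖u z - a z.2‖ₑ ^ q + ‖u w - a w.2‖ₑ ^ q) + 2 * ‖a z.2 - a w.2‖ₑ ^ q := by
    intro z w
    have e : u z - u w = ((u z - a z.2) + -(u w - a w.2)) + (a z.2 - a w.2) := by abel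
    calc ‖u z - u w‖ₑ ^ q
        ≤ ((‖u z - a z.2‖ₑ + ‖u w - a w.2‖ₑ) + ‖a z.2 - a w.2‖ₑ) ^ q := by
          refine ENNReal.rpow_le_rpow ?_ hq0
          rw [e]
          refine (enorm_add_le _ _).trans ?_
          gcongr
          refine (enorm_add_le _ _).trans ?_
          rw [enorm_neg]
      _ ≤ 2 * ((‖u z - a z.2‖ₑ + ‖u w - a w.2‖ₑ) ^ q + ‖a z.2 - a w.2‖ₑ ^ q) :=
          ENNReal.add_rpow_le_two_mul hq hq2 _ _
      _ ≤ 2 * (2 * (‖u z - a z.2‖ₑ ^ q + ‖u w - a w.2‖ₑ ^ q) + ‖a z.2 - a w.2‖ₑ ^ q) := by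
          gcongr
          exact ENNReal.add_rpow_le_two_mul hq hq2 _ _
      _ = _ := by ring
  set D := ∫⁻ z, ‖u z - a z.2‖ₑ ^ q ∂(P.prod S) with hD
  have hEsnd : ∫⁻ z : X × Y, E z.2 ∂(P.prod S) = ∫⁻ t, E t ∂S :=
    measurePreserving_snd.lintegral_comp hEm
  set G := b ^ q * Γ ^ q with hG
  have hEs : Measurable fun z : X × Y => E z.2 := hEm.comp measurable_snd
  calc ∫⁻ z, ∫⁻ w, ‖u z - u w‖ₑ ^ q ∂(P.prod S) ∂(P.prod S)
      ≤ ∫⁻ z, ∫⁻ w, (4 * (‖u z - a z.2‖ₑ ^ q + ‖u w - a w.2‖ₑ ^ q)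
          + 2 * (G * (2 * (E z.2 + E w.2)))) ∂(P.prod S) ∂(P.prod S) := by
        refine lintegral_mono_ae ?_
        filter_upwards [hsnd.ae htime] with z hz
        refine lintegral_mono_ae ?_
        filter_upwards [hsnd.ae hz] with w hw
        refine (hpt z w).trans ?_
        gcongr
    _ = ∫⁻ z, (4 * (‖u z - a z.2‖ₑ ^ q + D)
          + 2 * (G * (2 * (E z.2 + ∫⁻ t, E t ∂S)))) ∂(P.prod S) := by
        refine lintegral_congr fun z => ?_
        rw [lintegral_add_left (by fun_prop), lintegral_const_mul _ (by fun_prop),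
          lintegral_add_left (by fun_prop), lintegral_const_mul _ (by fun_prop),
          lintegral_const_mul _ (by fun_prop), lintegral_const_mul _ (by fun_prop),
          lintegral_add_left (by fun_prop), hEsnd]
        simp [hD]
    _ = 8 * D + 8 * (G * ∫⁻ t, E t ∂S) := by
        rw [lintegral_add_left (by fun_prop), lintegral_const_mul _ (by fun_prop),
          lintegral_add_left (by fun_prop), lintegral_const_mul _ (by fun_prop),
          lintegral_const_mul _ (by fun_prop), lintegral_const_mul _ (by fun_prop),
          lintegral_add_left (by fun_prop), hEsnd]
        simp only [lintegral_const, measure_univ, mul_one, ← hD]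
        ring
    _ ≤ _ := by
        gcongr

end Combination

/-! ### Cut-off functions and weighted means on balls -/

lemma exists_cutoff (n : ℕ) : ∃ C : ℝ, 0 ≤ C ∧ ∀ (x₀ : Spc n) (ρ : ℝ), 0 < ρ →
    ∃ η : Spc n → ℝ, ContDiff ℝ (⊤ : ℕ∞) η ∧ HasCompactSupport η ∧
      tsupport η ⊆ Metric.ball x₀ ρ ∧ (∀ x, 0 ≤ η x) ∧ (∀ x, η x ≤ 1) ∧
      (∀ x ∈ Metric.ball x₀ (ρ / 2), η x = 1) ∧ ∀ x, ‖fderiv ℝ η x‖ ≤ C / ρ := by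
  let f : ContDiffBump (0 : Spc n) := ⟨1 / 2, 3 / 4, by norm_num, by norm_num⟩
  have hf : ContDiff ℝ (⊤ : ℕ∞) f := f.contDiff
  obtain ⟨C, hC⟩ := (hf.continuous_fderiv (by simp)).bounded_above_of_compact_support
    (f.hasCompactSupport.fderiv ℝ)
  refine ⟨C, (norm_nonneg _).trans (hC 0), fun x₀ ρ hρ => ?_⟩
  let e : Spc n ≃ₜ Spc n :=
    (Homeomorph.subRight x₀).trans (Homeomorph.smulOfNeZero ρ⁻¹ (by positivity))
  have he : ∀ x, e x = ρ⁻¹ • (x - x₀) := fun x => rfl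
  have hn : ∀ x, ‖e x‖ = ‖x - x₀‖ / ρ := fun x => by
    rw [he, norm_smul, Real.norm_of_nonneg (by positivity)]; field_simp
  have hs : tsupport (fun x => f (e x)) = e ⁻¹' tsupport f := tsupport_comp_eq_preimage f e
  refine ⟨fun x => f (e x), ?_, f.hasCompactSupport.comp_homeomorph e, ?_, fun x => f.nonneg,
    fun x => f.le_one, fun x hx => ?_, fun x => ?_⟩
  · simp only [he]
    exact hf.comp ((contDiff_id.sub contDiff_const).const_smul _)
  · rw [hs, f.tsupport_eq]
    intro x hx
    have h1 : ‖e x‖ ≤ 3 / 4 := by simpa using hx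
    rw [hn, div_le_iff₀ hρ] at h1
    rw [Metric.mem_ball, dist_eq_norm]; linarith
  · refine f.one_of_mem_closedBall ?_
    rw [Metric.mem_ball, dist_eq_norm] at hx
    rw [mem_closedBall_zero_iff, hn, div_le_iff₀ hρ]
    change _ ≤ 1 / 2 * ρ
    linarith
  · have h1 : HasFDerivAt (fun x => ρ⁻¹ • (x - x₀)) (ρ⁻¹ • ContinuousLinearMap.id ℝ (Spc n)) x :=
      ((hasFDerivAt_id x).sub_const x₀).const_smul ρ⁻¹
    have h2 := ((hf.differentiable (by simp) (e x)).hasFDerivAt.comp x h1).fderiv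
    change ‖fderiv ℝ (f ∘ e) x‖ ≤ _
    rw [h2, ContinuousLinearMap.comp_smul, ContinuousLinearMap.comp_id, norm_smul,
      Real.norm_of_nonneg (by positivity), div_eq_inv_mul]
    gcongr
    exact hC _

/-- The measure `η dx / ∫ η` of a cut-off function `η` on a ball. -/
lemma exists_weighted_probabilityMeasure {x₀ : Spc n} {ρ : ℝ} (hρ : 0 < ρ) {η : Spc n → ℝ}
    (hη : Continuous η) (hη0 : ∀ x, 0 ≤ η x) (hη1 : ∀ x, η x ≤ 1)
    (hηρ : ∀ x ∈ Metric.ball x₀ (ρ / 2), η x = 1) :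
    ∃ (W : Measure (Spc n)) (m : ℝ), IsProbabilityMeasure W ∧ 0 < m ∧
      ENNReal.ofReal m⁻¹ ≤ 2 ^ n * (volume (Metric.ball x₀ ρ))⁻¹ ∧
      W ≤ (2 ^ n : ℝ≥0∞) • ((volume (Metric.ball x₀ ρ))⁻¹ • volume.restrict (Metric.ball x₀ ρ)) ∧
      ∀ f : Spc n → Vec N, ∫ x, f x ∂W = m⁻¹ • ∫ x in Metric.ball x₀ ρ, η x • f x := by
  set B := Metric.ball x₀ ρ with hB
  have hBf : volume B ≠ ∞ := measure_ball_lt_top.ne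
  have hB0 : volume B ≠ 0 := (Metric.measure_ball_pos volume x₀ hρ).ne'
  set M := ∫⁻ x in B, ENNReal.ofReal (η x) with hM
  have hMle : M ≤ volume B := by
    calc M ≤ ∫⁻ x in B, 1 := lintegral_mono fun x => by
            rw [← ENNReal.ofReal_one]; exact ENNReal.ofReal_le_ofReal (hη1 x)
      _ = volume B := by simp
  have hMf : M ≠ ∞ := (hMle.trans_lt hBf.lt_top).ne
  have hvol : volume B = 2 ^ n * volume (Metric.ball x₀ (ρ / 2)) := by
    have h1 := Measure.addHaar_ball_mul_of_pos (volume : Measure (Spc n)) x₀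
      (show (0:ℝ) < 2 by norm_num) (ρ / 2)
    rw [show 2 * (ρ / 2) = ρ by ring] at h1
    rw [hB, h1, Measure.addHaar_ball_center volume x₀]
    simp [finrank_euclideanSpace, ENNReal.ofReal_pow]
  have hMge : volume B ≤ 2 ^ n * M := by
    rw [hvol]
    gcongr
    calc volume (Metric.ball x₀ (ρ / 2))
        = ∫⁻ x in Metric.ball x₀ (ρ / 2), ENNReal.ofReal (η x) := by
          rw [setLIntegral_congr_fun (g := fun _ => 1) Metric.isOpen_ball.measurableSet
            fun x hx => by simp [hηρ x hx]]
          simp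
      _ ≤ M := lintegral_mono_set (Metric.ball_subset_ball (by linarith))
  have hM0 : M ≠ 0 := by
    intro h; rw [h, mul_zero] at hMge; exact hB0 (le_antisymm hMge bot_le)
  have hMinv : M⁻¹ ≤ 2 ^ n * (volume B)⁻¹ := by
    rw [← ENNReal.inv_le_inv] at hMge
    rw [ENNReal.mul_inv (by simp) (by simp)] at hMge
    calc M⁻¹ = 2 ^ n * ((2 ^ n)⁻¹ * M⁻¹) := by
          rw [← mul_assoc, ENNReal.mul_inv_cancel (by simp) (by simp), one_mul]
      _ ≤ _ := by gcongr
  have hηm : Measurable fun x => (η x).toNNReal := hη.measurable.real_toNNReal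
  refine ⟨M⁻¹ • (volume.restrict B).withDensity fun x => ((η x).toNNReal : ℝ≥0∞), M.toReal,
    ⟨?_⟩, ENNReal.toReal_pos hM0 hMf, ?_, ?_, fun f => ?_⟩
  · rw [Measure.smul_apply, withDensity_apply _ MeasurableSet.univ, Measure.restrict_univ,
      smul_eq_mul]
    exact ENNReal.inv_mul_cancel hM0 hMf
  · rwa [← ENNReal.toReal_inv, ENNReal.ofReal_toReal (by simpa using hM0)]
  · rw [smul_smul]
    refine Measure.le_iff.mpr fun s hs => ?_
    rw [Measure.smul_apply, Measure.smul_apply, withDensity_apply _ hs, smul_eq_mul, smul_eq_mul]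
    gcongr
    calc ∫⁻ x in s, ((η x).toNNReal : ℝ≥0∞) ∂volume.restrict B
        ≤ ∫⁻ x in s, 1 ∂volume.restrict B := lintegral_mono fun x => by
          rw [← ENNReal.ofReal_one]; exact ENNReal.ofReal_le_ofReal (hη1 x)
      _ = _ := by simp
  · rw [integral_smul_measure, integral_withDensity_eq_integral_smul hηm, ENNReal.toReal_inv]
    congr 2
    ext x
    rw [NNReal.smul_def, Real.coe_toNNReal _ (hη0 x)]

section WeakSolution

variable {p ν L T : ℝ} {Ω : Set (Spc n)} {A : Spc n × ℝ → Vec N → Mat N n → Mat N n}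
  {F : Spc n × ℝ → Mat N n} {u : Spc n × ℝ → Vec N} {Du : Spc n × ℝ → Mat N n}

lemma WeakSolution.hasWeakGradOn (h : WeakSolution p ν L T Ω A F u Du) {Q : Set (Spc n × ℝ)}
    (hQ : Q ⊆ Ω ×ˢ Ioo 0 T) : HasWeakGradOn u Du Q := by
  intro ψ h1 h2 h3 i j
  have hΩm := (h.openΩ.prod (isOpen_Ioo (a := (0:ℝ)) (b := T))).measurableSet
  have h4 := h.weakGrad ψ h1 h2 (h3.trans hQ) i j
  rwa [setIntegral_eq_of_subset_of_forall_sdiff_eq_zero hΩm hQ,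
    setIntegral_eq_of_subset_of_forall_sdiff_eq_zero hΩm hQ] at h4
  · intro z hz
    rw [image_eq_zero_of_notMem_tsupport fun hz' => hz.2 (h3 hz'), mul_zero]
  · intro z hz
    have h5 : fderiv ℝ ψ z = 0 := image_eq_zero_of_notMem_tsupport fun hz' =>
      hz.2 (h3 (tsupport_fderiv_subset ℝ hz'))
    have h6 := fderiv_spatial_eq_sum (h1.differentiable (by simp)) z (EuclideanSpace.single j 1)
    rw [h5] at h6
    have h7 : pderivS j ψ z = 0 := by simpa using h6.symm
    rw [h7, mul_zero]

/-- Poincaré-type estimate for weak solutions on cylinders, before the intrinsic scaling is used.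
The averages over the cylinder are integrals with respect to `π`. -/
theorem WeakSolution.lintegral_lintegral_enorm_sub_rpow_le
    (h : WeakSolution p ν L T Ω A F u Du) (hp : 1 < p) (hp2 : p ≤ 2) {q : ℝ} (hq : 1 ≤ q)
    (hqp : q ≤ p) {C₀ : ℝ} {x₀ : Spc n} {ρ : ℝ} (hρ : 0 < ρ) {a b : ℝ} (hab : a < b)
    (hQ : Metric.ball x₀ ρ ×ˢ Ioo a b ⊆ Ω ×ˢ Ioo 0 T) {η : Spc n → ℝ}
    (hη : ContDiff ℝ (⊤ : ℕ∞) η) (hηc : HasCompactSupport η)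
    (hηB : tsupport η ⊆ Metric.ball x₀ ρ) (hη0 : ∀ x, 0 ≤ η x) (hη1 : ∀ x, η x ≤ 1)
    (hηρ : ∀ x ∈ Metric.ball x₀ (ρ / 2), η x = 1) (hC₀ : ∀ x, ‖fderiv ℝ η x‖ ≤ C₀ / ρ)
    {π : Measure (Spc n × ℝ)} (hπ : π = (volume (Metric.ball x₀ ρ ×ˢ Ioo a b))⁻¹
      • volume.restrict (Metric.ball x₀ ρ ×ˢ Ioo a b)) :
    ∫⁻ z, ∫⁻ w, ‖u z - u w‖ₑ ^ q ∂π ∂π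
      ≤ 8 * (ENNReal.ofReal (pwMeanConst (p - 1)) ^ q * 2 ^ n
          * (ENNReal.ofReal (2 * ρ) ^ q * 2 ^ n * ∫⁻ z, ‖Du z‖ₑ ^ q ∂π))
        + 8 * (ENNReal.ofReal (1 / (p - 1)) ^ q
          * (2 ^ n * ENNReal.ofReal (C₀ / ρ) * ENNReal.ofReal (b - a)
            * ∫⁻ z, (ENNReal.ofReal L * ‖Du z‖ₑ ^ (p - 1) + ‖F z‖ₑ ^ (p - 1)) ∂π) ^ q
          * (2 ^ n * ∫⁻ z, ‖u z‖ₑ ^ p ∂π) ^ (q * (2 - p) / p)) := by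
  set B := Metric.ball x₀ ρ with hB
  set I := Ioo a b with hI
  have hBf : volume B ≠ ∞ := measure_ball_lt_top.ne
  have hB0 : volume B ≠ 0 := (Metric.measure_ball_pos volume x₀ hρ).ne'
  have hIv : volume I = ENNReal.ofReal (b - a) := Real.volume_Ioo
  have hIf : volume I ≠ ∞ := by rw [hIv]; simp
  have hI0 : volume I ≠ 0 := by rw [hIv]; simpa using hab
  have hQv : volume (B ×ˢ I) = volume B * volume I := by
    rw [Measure.volume_eq_prod, Measure.prod_prod]
  have hQf : volume (B ×ˢ I) ≠ ∞ := by rw [hQv]; finiteness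
  have hQ0 : volume (B ×ˢ I) ≠ 0 := by rw [hQv]; exact mul_ne_zero hB0 hI0
  set P : Measure (Spc n) := (volume B)⁻¹ • volume.restrict B with hP
  set S : Measure ℝ := (volume I)⁻¹ • volume.restrict I with hS
  have : IsProbabilityMeasure P := ⟨by simp [hP, ENNReal.inv_mul_cancel hB0 hBf]⟩
  have : IsProbabilityMeasure S := ⟨by simp [hS, ENNReal.inv_mul_cancel hI0 hIf]⟩
  have hπ' : π = P.prod S := by
    rw [hπ, hP, hS, Measure.prod_smul_left, Measure.prod_smul_right, Measure.prod_restrict,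
      ← Measure.volume_eq_prod, smul_smul, hQv, ENNReal.mul_inv (Or.inl hB0) (Or.inl hBf)]
  obtain ⟨W, m, hWp, hm, hmle, hWP, hWi⟩ :=
    exists_weighted_probabilityMeasure (N := N) hρ hη.continuous hη0 hη1 hηρ
  have : IsFiniteMeasure (volume.restrict (B ×ˢ I)) :=
    ⟨by simpa using (measure_mono hQ).trans_lt h.volume_lt_top⟩
  have hle : volume.restrict (B ×ˢ I) ≤ volume.restrict (Ω ×ˢ Ioo (0 : ℝ) T) :=
    Measure.restrict_mono hQ le_rfl
  have hp1 : (1 : ℝ≥0∞) ≤ ENNReal.ofReal p := by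
    rw [← ENNReal.ofReal_one]; exact ENNReal.ofReal_le_ofReal hp.le
  set Z := ∫⁻ z, (ENNReal.ofReal L * ‖Du z‖ₑ ^ (p - 1) + ‖F z‖ₑ ^ (p - 1)) ∂π with hZ
  have hglue : ∀ᵐ t ∂S, ∀ᵐ τ ∂S,
      ‖(∫ y, pw (p - 1) (u (y, τ)) ∂W) - ∫ y, pw (p - 1) (u (y, t)) ∂W‖ₑ
        ≤ 2 ^ n * ENNReal.ofReal (C₀ / ρ) * ENNReal.ofReal (b - a) * Z := by
    have hac : S ≪ volume.restrict I := Measure.smul_absolutelyContinuous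
    filter_upwards [hac.ae_le (h.ae_ae_enorm_mean_sub_le hp Metric.isOpen_ball.measurableSet
      isOpen_Ioo (convex_Ioo a b) hQ hη hηc hηB hC₀)] with t ht
    filter_upwards [hac.ae_le ht] with τ hτ
    have hZ' : ∫⁻ z in B ×ˢ I, (ENNReal.ofReal L * ‖Du z‖ₑ ^ (p - 1) + ‖F z‖ₑ ^ (p - 1))
        = volume B * ENNReal.ofReal (b - a) * Z := by
      rw [hZ, hπ, lintegral_smul_measure, smul_eq_mul, ← mul_assoc, ← hIv, ← hQv,
        ENNReal.mul_inv_cancel hQ0 hQf, one_mul]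
    rw [hWi, hWi, ← smul_sub, enorm_smul, Real.enorm_of_nonneg (by positivity)]
    refine (mul_le_mul' hmle (hτ.trans_eq (by rw [hZ']))).trans_eq ?_
    calc 2 ^ n * (volume B)⁻¹ * (ENNReal.ofReal (C₀ / ρ) * (volume B * ENNReal.ofReal (b - a) * Z))
        = (volume B)⁻¹ * volume B
          * (2 ^ n * ENNReal.ofReal (C₀ / ρ) * ENNReal.ofReal (b - a) * Z) := by ring
      _ = _ := by rw [ENNReal.inv_mul_cancel hB0 hBf, one_mul]
  have hmain := _root_.lintegral_lintegral_enorm_sub_rpow_le hp hp2 hq hqp hWP h.measu hglue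
  rw [← hπ'] at hmain
  refine hmain.trans ?_
  gcongr
  have hpo := (h.hasWeakGradOn hQ).lintegral_enorm_sub_rpow_le isOpen_Ioo (convex_Ioo a b) h.measu
    ((h.memLp_u.mono_measure hle).integrable hp1) h.measDu
    ((h.memLp_Du.mono_measure hle).integrable hp1) hq
  have hball : volume (Metric.ball (0 : Spc n) (2 * ρ)) = 2 ^ n * volume B := by
    rw [hB, Measure.addHaar_ball_mul_of_pos volume (0 : Spc n) (show (0:ℝ) < 2 by norm_num) ρ,
      Measure.addHaar_ball_center volume x₀]
    simp [finrank_euclideanSpace, ENNReal.ofReal_pow]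
  calc ∫⁻ z, ∫⁻ y, ‖u (y, z.2) - u z‖ₑ ^ q ∂P ∂π
      = (volume B)⁻¹ * ((volume (B ×ˢ I))⁻¹
          * ∫⁻ z in B ×ˢ I, ∫⁻ y in B, ‖u (y, z.2) - u z‖ₑ ^ q) := by
        simp only [hP, hπ, lintegral_smul_measure, smul_eq_mul]
        rw [lintegral_const_mul' _ _ (by simpa using hB0)]
        ring
    _ ≤ (volume B)⁻¹ * ((volume (B ×ˢ I))⁻¹ * (ENNReal.ofReal (2 * ρ) ^ q
          * volume (Metric.ball (0 : Spc n) (2 * ρ)) * ∫⁻ z in B ×ˢ I, ‖Du z‖ₑ ^ q)) := by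
        gcongr
    _ = (volume B)⁻¹ * volume B * (ENNReal.ofReal (2 * ρ) ^ q * 2 ^ n
          * ((volume (B ×ˢ I))⁻¹ * ∫⁻ z in B ×ˢ I, ‖Du z‖ₑ ^ q)) := by
        rw [hball]; ring
    _ = _ := by
        rw [ENNReal.inv_mul_cancel hB0 hBf, one_mul, hπ, lintegral_smul_measure, smul_eq_mul]

end WeakSolution

/-! ### Intrinsic scaling -/

lemma Real.rpow_le_sq_of_one_le {x q : ℝ} (hx : 1 ≤ x) (hq : q ≤ 2) : x ^ q ≤ x ^ 2 := by
  rw [← Real.rpow_natCast x 2]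
  exact Real.rpow_le_rpow_of_exponent_le hx (by simpa using hq)

lemma rpow_le_of_mean_le {p q H G : ℝ} (hp : 1 < p) (hp2 : p ≤ 2) (hH : 0 ≤ H)
    (hG : 0 ≤ G) (hHG : H ≤ 2 * G ^ (q / p)) :
    H ≤ 2 * (H ^ (p - 1) * G ^ (q * (2 - p) / p)) := by
  have h1 : H ^ (2 - p) ≤ 2 * G ^ (q * (2 - p) / p) := by
    calc H ^ (2 - p) ≤ (2 * G ^ (q / p)) ^ (2 - p) := by gcongr
      _ = 2 ^ (2 - p) * G ^ (q * (2 - p) / p) := by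
          rw [Real.mul_rpow (by norm_num) (by positivity), ← Real.rpow_mul hG]
          congr 2; ring
      _ ≤ 2 * G ^ (q * (2 - p) / p) := by
          gcongr
          calc (2 : ℝ) ^ (2 - p) ≤ 2 ^ (1 : ℝ) :=
                Real.rpow_le_rpow_of_exponent_le (by norm_num) (by linarith)
            _ = 2 := Real.rpow_one 2
  calc H = H ^ (p - 1) * H ^ (2 - p) := by
        rw [← Real.rpow_add' hH (by norm_num), show p - 1 + (2 - p) = 1 by ring, Real.rpow_one]
    _ ≤ H ^ (p - 1) * (2 * G ^ (q * (2 - p) / p)) := by gcongr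
    _ = _ := by ring

/-- Under the sub-intrinsic coupling, the powers of `μ` in the oscillation in time cancel. -/
lemma rpow_mul_rpow_le_of_subIntrinsic {p q κ c₂ ρ μ K H G U : ℝ} (hp : 1 < p) (hp2 : p ≤ 2)
    (hq : 1 ≤ q) (hqp : q ≤ p) (hκ : 1 ≤ κ) (hc₂ : 0 ≤ c₂) (hρ : 0 < ρ) (hμ : 0 < μ)
    (hK : 1 ≤ K) (hH : 0 ≤ H) (hG : 0 ≤ G) (hU0 : 0 ≤ U) (hU : U ≤ K * μ ^ p * ρ ^ p * G) :
    (c₂ * (μ ^ (p - 2) * ρ ^ (p - 1)) * H ^ ((p - 1) / q)) ^ q * (κ * U) ^ (q * (2 - p) / p)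
      ≤ (1 + c₂) ^ 2 * (κ * K) * ρ ^ q * (H ^ (p - 1) * G ^ (q * (2 - p) / p)) := by
  set θ := q * (2 - p) / p with hθ
  have hθ0 : 0 ≤ θ := div_nonneg (mul_nonneg (by linarith) (by linarith)) (by linarith)
  have hθ1 : θ ≤ 1 := by
    refine div_le_one_of_le₀ ?_ (by linarith)
    nlinarith
  have hpθ : p * θ = q * (2 - p) := by rw [hθ]; field_simp
  have e1 : (c₂ * (μ ^ (p - 2) * ρ ^ (p - 1)) * H ^ ((p - 1) / q)) ^ q
      = c₂ ^ q * (μ ^ ((p - 2) * q) * ρ ^ ((p - 1) * q)) * H ^ (p - 1) := by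
    rw [Real.mul_rpow (by positivity) (by positivity),
      Real.mul_rpow (by positivity) (by positivity),
      Real.mul_rpow (by positivity) (by positivity), ← Real.rpow_mul hμ.le, ← Real.rpow_mul hρ.le,
      ← Real.rpow_mul hH, div_mul_cancel₀ _ (by linarith)]
  have e2 : (κ * U) ^ θ ≤ κ * K * (μ ^ (q * (2 - p)) * ρ ^ (q * (2 - p))) * G ^ θ := by
    calc (κ * U) ^ θ ≤ (κ * (K * μ ^ p * ρ ^ p * G)) ^ θ := by gcongr
      _ = (κ * K) ^ θ * (μ ^ (q * (2 - p)) * ρ ^ (q * (2 - p))) * G ^ θ := by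
          rw [show κ * (K * μ ^ p * ρ ^ p * G) = κ * K * (μ ^ p * ρ ^ p) * G by ring,
            Real.mul_rpow (by positivity) hG, Real.mul_rpow (by positivity) (by positivity),
            Real.mul_rpow (x := μ ^ p) (by positivity) (by positivity), ← Real.rpow_mul hμ.le,
            ← Real.rpow_mul hρ.le, hpθ]
      _ ≤ _ := by
          gcongr
          have h1 : 1 ≤ κ * K := one_le_mul_of_one_le_of_one_le hκ hK
          calc (κ * K) ^ θ ≤ (κ * K) ^ (1 : ℝ) := Real.rpow_le_rpow_of_exponent_le h1 hθ1
            _ = κ * K := Real.rpow_one _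
  have e3 : c₂ ^ q ≤ (1 + c₂) ^ 2 :=
    (Real.rpow_le_rpow hc₂ (by linarith) (by linarith)).trans
      (Real.rpow_le_sq_of_one_le (by linarith) (by linarith))
  have e4 : μ ^ ((p - 2) * q) * μ ^ (q * (2 - p)) = 1 := by
    rw [← Real.rpow_add hμ, show (p - 2) * q + q * (2 - p) = 0 by ring, Real.rpow_zero]
  have e5 : ρ ^ ((p - 1) * q) * ρ ^ (q * (2 - p)) = ρ ^ q := by
    rw [← Real.rpow_add hρ]; congr 1; ring
  rw [e1]
  calc c₂ ^ q * (μ ^ ((p - 2) * q) * ρ ^ ((p - 1) * q)) * H ^ (p - 1) * (κ * U) ^ θ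
      ≤ (1 + c₂) ^ 2 * (μ ^ ((p - 2) * q) * ρ ^ ((p - 1) * q)) * H ^ (p - 1)
        * (κ * K * (μ ^ (q * (2 - p)) * ρ ^ (q * (2 - p))) * G ^ θ) := by gcongr
    _ = (1 + c₂) ^ 2 * (κ * K) * (μ ^ ((p - 2) * q) * μ ^ (q * (2 - p)))
        * (ρ ^ ((p - 1) * q) * ρ ^ (q * (2 - p))) * (H ^ (p - 1) * G ^ θ) := by ring
    _ = _ := by rw [e4, e5, mul_one]

lemma parCyl_eq_of_le_two {p μ ρ : ℝ} (hp2 : p ≤ 2) (z₀ : Spc n × ℝ) :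
    parCyl p μ ρ z₀ = Metric.ball z₀.1 ρ
      ×ˢ Ioo (z₀.2 - μ ^ (p - 2) * ρ ^ p) (z₀.2 + μ ^ (p - 2) * ρ ^ p) := by
  rcases hp2.lt_or_eq with h | rfl
  · simp [parCyl, h]
  · simp [parCyl]

/-! ### Averages as lower Lebesgue integrals -/

section Average

lemma ofReal_norm_rpow {E : Type*} [NormedAddCommGroup E] {r : ℝ} (hr : 0 ≤ r) (x : E) :
    ENNReal.ofReal (‖x‖ ^ r) = ‖x‖ₑ ^ r := by
  rw [← ofReal_norm, ENNReal.ofReal_rpow_of_nonneg (norm_nonneg _) hr]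

variable {X E E' : Type*} [MeasurableSpace X] {π : Measure X} [NormedAddCommGroup E]
  [MeasurableSpace E] [OpensMeasurableSpace E] [NormedAddCommGroup E'] [MeasurableSpace E']
  [OpensMeasurableSpace E']

lemma integral_norm_rpow_eq_toReal {r : ℝ} (hr : 0 ≤ r) {f : X → E} (hf : Measurable f) :
    ∫ x, ‖f x‖ ^ r ∂π = (∫⁻ x, ‖f x‖ₑ ^ r ∂π).toReal := by
  rw [integral_eq_lintegral_of_nonneg_ae (ae_of_all _ fun x => by positivity)
    (hf.norm.pow_const r).aestronglyMeasurable]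
  simp only [ofReal_norm_rpow hr]

lemma integral_norm_rpow_add_eq_toReal {r : ℝ} (hr : 0 ≤ r) {f : X → E} {g : X → E'}
    (hf : Measurable f) (hg : Measurable g) :
    ∫ x, (‖f x‖ ^ r + ‖g x‖ ^ r) ∂π = (∫⁻ x, (‖f x‖ₑ ^ r + ‖g x‖ₑ ^ r) ∂π).toReal := by
  have hm : Measurable fun x => ‖f x‖ ^ r + ‖g x‖ ^ r :=
    (hf.norm.pow_const r).add (hg.norm.pow_const r)
  rw [integral_eq_lintegral_of_nonneg_ae (ae_of_all _ fun x => by positivity)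
    hm.aestronglyMeasurable]
  congr 1
  refine lintegral_congr fun x => ?_
  rw [ENNReal.ofReal_add (by positivity) (by positivity), ofReal_norm_rpow hr, ofReal_norm_rpow hr]

lemma lintegral_rpow_le_rpow_lintegral_rpow [IsProbabilityMeasure π] {r s : ℝ} (hr : 0 ≤ r)
    (hs : 0 < s) (hrs : r ≤ s) {f : X → ℝ≥0∞} (hf : Measurable f) :
    ∫⁻ x, f x ^ r ∂π ≤ (∫⁻ x, f x ^ s ∂π) ^ (r / s) := by
  refine le_trans (le_of_eq (lintegral_congr fun x => ?_)) (lintegral_rpow_le_rpow_lintegral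
    (θ := r / s) (by positivity) (div_le_one_of_le₀ hrs hs.le) (hf.pow_const s).aemeasurable)
  rw [← ENNReal.rpow_mul, mul_div_cancel₀ _ hs.ne']

lemma lintegral_rpow_add_le [IsProbabilityMeasure π] {r s : ℝ} (hr : 0 ≤ r)
    (hs : 0 < s) (hrs : r ≤ s) {f g : X → ℝ≥0∞} (hf : Measurable f) (hg : Measurable g) :
    ∫⁻ x, (f x ^ r + g x ^ r) ∂π ≤ 2 * (∫⁻ x, (f x ^ s + g x ^ s) ∂π) ^ (r / s) := by
  have hrs0 : 0 ≤ r / s := by positivity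
  rw [lintegral_add_left (hf.pow_const r), two_mul]
  refine add_le_add ((lintegral_rpow_le_rpow_lintegral_rpow hr hs hrs hf).trans ?_)
    ((lintegral_rpow_le_rpow_lintegral_rpow hr hs hrs hg).trans ?_)
  · exact ENNReal.rpow_le_rpow (lintegral_mono fun x => le_self_add) hrs0
  · exact ENNReal.rpow_le_rpow (lintegral_mono fun x => le_add_self) hrs0

lemma integral_norm_sub_integral_rpow_le [IsProbabilityMeasure π] {f : X → Vec N}
    (hf : Measurable f) (hfi : Integrable f π) {q : ℝ} (hq : 1 ≤ q)
    (hfin : ∫⁻ z, ∫⁻ w, ‖f z - f w‖ₑ ^ q ∂π ∂π ≠ ∞) :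
    ∫ z, ‖f z - ∫ w, f w ∂π‖ ^ q ∂π ≤ (∫⁻ z, ∫⁻ w, ‖f z - f w‖ₑ ^ q ∂π ∂π).toReal := by
  rw [integral_norm_rpow_eq_toReal (by linarith) (hf.sub_const _)]
  refine ENNReal.toReal_mono hfin (lintegral_mono fun z => ?_)
  have e : f z - ∫ w, f w ∂π = ∫ w, (f z - f w) ∂π := by
    rw [integral_sub (integrable_const _) hfi]; simp
  calc ‖f z - ∫ w, f w ∂π‖ₑ ^ q ≤ (∫⁻ w, ‖f z - f w‖ₑ ∂π) ^ q := by
        rw [e]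
        exact ENNReal.rpow_le_rpow (enorm_integral_le_lintegral_enorm _) (by linarith)
    _ ≤ _ := rpow_lintegral_le_lintegral_rpow hq (hf.const_sub _).enorm.aemeasurable

end Average

/-! ### The parabolic Poincaré inequality -/

section Integrability

variable {X : Type*} [MeasurableSpace X] {π : Measure X}

lemma lintegral_enorm_rpow_ne_top {E : Type*} [NormedAddCommGroup E] {f : X → E} {p : ℝ}
    (hp : 0 < p) (hf : MemLp f (ENNReal.ofReal p) π) : ∫⁻ z, ‖f z‖ₑ ^ p ∂π ≠ ∞ := by
  have h := lintegral_rpow_enorm_lt_top_of_eLpNorm_lt_top (by simpa using hp)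
    ENNReal.ofReal_ne_top hf.2
  rw [ENNReal.toReal_ofReal hp.le] at h
  exact h.ne

lemma lintegral_const_mul_rpow_add_le [IsProbabilityMeasure π] {p q : ℝ} (hp : 1 < p) (hp2 : p ≤ 2)
    (hq : 1 ≤ q) (a : ℝ≥0∞) {f g : X → ℝ≥0∞} (hf : Measurable f) (hg : Measurable g) :
    ∫⁻ z, (a * f z ^ (p - 1) + g z ^ (p - 1)) ∂π
      ≤ (a + 1) * (2 * (∫⁻ z, (f z ^ q + g z ^ q) ∂π) ^ ((p - 1) / q)) := by
  have hm : Measurable fun z => f z ^ (p - 1) + g z ^ (p - 1) :=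
    (hf.pow_const _).add (hg.pow_const _)
  calc ∫⁻ z, (a * f z ^ (p - 1) + g z ^ (p - 1)) ∂π
      ≤ ∫⁻ z, (a + 1) * (f z ^ (p - 1) + g z ^ (p - 1)) ∂π := by
        refine lintegral_mono fun z => ?_
        rw [mul_add]
        exact add_le_add (mul_le_mul_left le_self_add _)
          (le_mul_of_one_le_left zero_le le_add_self)
    _ = (a + 1) * ∫⁻ z, (f z ^ (p - 1) + g z ^ (p - 1)) ∂π := lintegral_const_mul _ hm
    _ ≤ _ := by
        gcongr
        exact lintegral_rpow_add_le (by linarith) (by linarith) (by linarith) hf hg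

end Integrability

/-- The two contributions to the oscillation, in space and in time, are absorbed under the
sub-intrinsic coupling. -/
lemma oscillation_le_of_subIntrinsic {p q κ M β C₀ L ρ μ K H G U : ℝ} (hp : 1 < p) (hp2 : p ≤ 2)
    (hq : 1 ≤ q) (hqp : q ≤ p) (hκ : 1 ≤ κ) (hM : 1 ≤ M) (hβ : 1 ≤ β) (hC₀ : 0 ≤ C₀) (hL : 0 ≤ L)
    (hρ : 0 < ρ) (hμ : 0 < μ) (hK : 1 ≤ K) (hH : 0 ≤ H) (hG : 0 ≤ G) (hU0 : 0 ≤ U)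
    (hHG : H ≤ 2 * G ^ (q / p)) (hU : U ≤ K * μ ^ p * ρ ^ p * G) :
    8 * (M ^ q * κ * ((2 * ρ) ^ q * κ * H))
      + 8 * (β ^ q * (κ * (C₀ / ρ) * (2 * (μ ^ (p - 2) * ρ ^ p))
        * ((L + 1) * (2 * H ^ ((p - 1) / q)))) ^ q * (κ * U) ^ (q * (2 - p) / p))
    ≤ (64 * M ^ 2 * κ ^ 2 + 8 * β ^ 2 * ((1 + 4 * κ * C₀ * (L + 1)) ^ 2 * (κ * K)))
      * ρ ^ q * (H ^ (p - 1) * G ^ (q * (2 - p) / p)) := by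
  have hq2 : q ≤ 2 := hqp.trans hp2
  have e1 := rpow_le_of_mean_le hp hp2 hH hG hHG
  have e2 := rpow_mul_rpow_le_of_subIntrinsic hp hp2 hq hqp hκ
    (show 0 ≤ 4 * κ * C₀ * (L + 1) by positivity) hρ hμ hK hH hG hU0 hU
  have e3 : κ * (C₀ / ρ) * (2 * (μ ^ (p - 2) * ρ ^ p)) * ((L + 1) * (2 * H ^ ((p - 1) / q)))
      = 4 * κ * C₀ * (L + 1) * (μ ^ (p - 2) * ρ ^ (p - 1)) * H ^ ((p - 1) / q) := by
    rw [Real.rpow_sub_one hρ.ne']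
    ring
  have e4 : (2 * ρ) ^ q ≤ 4 * ρ ^ q := by
    rw [Real.mul_rpow (by norm_num) hρ.le]
    gcongr
    exact (Real.rpow_le_sq_of_one_le (by norm_num) hq2).trans (by norm_num)
  have e5 := Real.rpow_le_sq_of_one_le hM hq2
  have e6 := Real.rpow_le_sq_of_one_le hβ hq2
  rw [e3]
  set W := H ^ (p - 1) * G ^ (q * (2 - p) / p)
  calc _ ≤ 8 * (M ^ 2 * κ * (4 * ρ ^ q * κ * (2 * W)))
        + 8 * (β ^ 2 * ((1 + 4 * κ * C₀ * (L + 1)) ^ 2 * (κ * K) * ρ ^ q * W)) := by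
        rw [mul_assoc (β ^ q)]
        gcongr
    _ = _ := by ring

/-- Parabolic Poincaré inequality, subquadratic case: let `1 < p ≤ 2` and `u` a weak solution.
On any `μ`-sub-intrinsic cylinder `Q_ρ^{(μ)}(z₀) ⊆ Ω_T`, for any `q ∈ [1, p]`:
`⨍⨍ |u − (u)|^q/ρ^q ≤ c (⨍⨍ (|Du|^q + |F|^q))^{p−1} (⨍⨍ (|Du|^p + |F|^p))^{q(2−p)/p}`
with `c = c(n, p, L, K)`. -/
theorem parabolic_poincare_subquadratic (n : ℕ) (p L K : ℝ)
    (hp : 1 < p) (hp2 : p ≤ 2) (hK : 1 ≤ K) :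
    ∃ c > 0, ∀ (N : ℕ) (ν T : ℝ) (Ω : Set (Spc n))
      (A : Spc n × ℝ → Vec N → Mat N n → Mat N n) (F : Spc n × ℝ → Mat N n)
      (u : Spc n × ℝ → Vec N) (Du : Spc n × ℝ → Mat N n),
      WeakSolution p ν L T Ω A F u Du →
      ∀ (z₀ : Spc n × ℝ) (ρ μ : ℝ), 0 < ρ → 0 < μ →
        parCyl p μ ρ z₀ ⊆ Ω ×ˢ Ioo 0 T →
        SubIntrinsic p K μ ρ z₀ u Du F →
        ∀ q ∈ Icc (1 : ℝ) p,
          ⨍ z in parCyl p μ ρ z₀, ‖u z - ⨍ w in parCyl p μ ρ z₀, u w‖ ^ q / ρ ^ q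
            ≤ c * (⨍ z in parCyl p μ ρ z₀, (‖Du z‖ ^ q + ‖F z‖ ^ q)) ^ (p - 1)
                * (⨍ z in parCyl p μ ρ z₀, (‖Du z‖ ^ p + ‖F z‖ ^ p)) ^ (q * (2 - p) / p) := by
  obtain ⟨C₀, hC₀, hcut⟩ := exists_cutoff n
  have hM : 1 ≤ pwMeanConst (p - 1) := one_le_pwMeanConst (by linarith) (by linarith)
  have hβ : 1 ≤ 1 / (p - 1) := by
    rw [le_div_iff₀ (by linarith)]; linarith
  have hp0 : 0 < p := by linarith
  refine ⟨64 * pwMeanConst (p - 1) ^ 2 * (2 ^ n) ^ 2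
    + 8 * (1 / (p - 1)) ^ 2 * ((1 + 4 * 2 ^ n * C₀ * (L + 1)) ^ 2 * (2 ^ n * K)), by positivity, ?_⟩
  intro N ν T Ω A F u Du h z₀ ρ μ hρ hμ hQ hsub q ⟨hq, hqp⟩
  have hL : 0 ≤ L := h.hν.le.trans h.hνL
  have hq0 : 0 < q := by linarith
  unfold SubIntrinsic at hsub
  rw [parCyl_eq_of_le_two hp2] at hQ hsub ⊢
  obtain ⟨η, hη, hηc, hηB, hη0, hη1, hηρ, hηC⟩ := hcut z₀.1 ρ hρ
  have hr : 0 < μ ^ (p - 2) * ρ ^ p := by positivity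
  have hosc := h.lintegral_lintegral_enorm_sub_rpow_le hp hp2 hq hqp hρ
    (show z₀.2 - μ ^ (p - 2) * ρ ^ p < z₀.2 + μ ^ (p - 2) * ρ ^ p by linarith)
    hQ hη hηc hηB hη0 hη1 hηρ hηC rfl
  rw [show z₀.2 + μ ^ (p - 2) * ρ ^ p - (z₀.2 - μ ^ (p - 2) * ρ ^ p)
    = 2 * (μ ^ (p - 2) * ρ ^ p) by ring] at hosc
  have hQ0 : volume (Metric.ball z₀.1 ρ
      ×ˢ Ioo (z₀.2 - μ ^ (p - 2) * ρ ^ p) (z₀.2 + μ ^ (p - 2) * ρ ^ p)) ≠ 0 := by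
    refine ((Metric.isOpen_ball.prod isOpen_Ioo).measure_pos volume ?_).ne'
    exact ⟨z₀, Metric.mem_ball_self hρ, by constructor <;> linarith⟩
  set Q := Metric.ball z₀.1 ρ ×ˢ Ioo (z₀.2 - μ ^ (p - 2) * ρ ^ p) (z₀.2 + μ ^ (p - 2) * ρ ^ p)
  have hQf : volume Q ≠ ∞ := ((measure_mono hQ).trans_lt h.volume_lt_top).ne
  set π : Measure (Spc n × ℝ) := (volume Q)⁻¹ • volume.restrict Q with hπ
  have hprob : IsProbabilityMeasure π :=
    ⟨by simp [hπ, ENNReal.inv_mul_cancel hQ0 hQf]⟩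
  have hmem : ∀ {E : Type} [NormedAddCommGroup E] {f : Spc n × ℝ → E},
      MemLp f (ENNReal.ofReal p) (volume.restrict (Ω ×ˢ Ioo 0 T)) →
      MemLp f (ENNReal.ofReal p) π := fun hf =>
    (hf.mono_measure (Measure.restrict_mono hQ le_rfl)).smul_measure (ENNReal.inv_ne_top.2 hQ0)
  simp only [average, Measure.restrict_apply_univ, ← hπ] at hsub ⊢
  have hU := lintegral_enorm_rpow_ne_top hp0 (hmem h.memLp_u)
  have hDu := lintegral_enorm_rpow_ne_top hp0 (hmem h.memLp_Du)
  have hF := lintegral_enorm_rpow_ne_top hp0 (hmem h.memLp_F)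
  have hG : ∫⁻ z, (‖Du z‖ₑ ^ p + ‖F z‖ₑ ^ p) ∂π ≠ ∞ := by
    rw [lintegral_add_left (h.measDu.enorm.pow_const p)]
    exact ENNReal.add_ne_top.2 ⟨hDu, hF⟩
  have hHG := lintegral_rpow_add_le (π := π) hq0.le hp0 hqp h.measDu.enorm h.measF.enorm
  have hGtop : 2 * (∫⁻ z, (‖Du z‖ₑ ^ p + ‖F z‖ₑ ^ p) ∂π) ^ (q / p) ≠ ∞ :=
    ENNReal.mul_ne_top (by simp) (ENNReal.rpow_ne_top_of_nonneg (by positivity) hG)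
  have hH := ne_top_of_le_ne_top hGtop hHG
  have hflux := lintegral_const_mul_rpow_add_le (π := π) hp hp2 hq (ENNReal.ofReal L)
    h.measDu.enorm h.measF.enorm
  have hgrad : ∫⁻ z, ‖Du z‖ₑ ^ q ∂π ≤ ∫⁻ z, (‖Du z‖ₑ ^ q + ‖F z‖ₑ ^ q) ∂π :=
    lintegral_mono fun z => le_self_add
  have hp1 : 1 ≤ ENNReal.ofReal p := ENNReal.one_le_ofReal.2 hp.le
  rw [integral_div, integral_norm_rpow_eq_toReal hp0.le h.measu,
    integral_norm_rpow_add_eq_toReal hp0.le h.measDu h.measF, max_eq_right hp2, sub_self,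
    Real.rpow_zero, one_mul, div_le_iff₀ (by positivity)] at hsub
  rw [integral_div, integral_norm_rpow_add_eq_toReal hp0.le h.measDu h.measF,
    integral_norm_rpow_add_eq_toReal hq0.le h.measDu h.measF, div_le_iff₀ (by positivity)]
  set H := ∫⁻ z, (‖Du z‖ₑ ^ q + ‖F z‖ₑ ^ q) ∂π
  set G := ∫⁻ z, (‖Du z‖ₑ ^ p + ‖F z‖ₑ ^ p) ∂π
  set U := ∫⁻ z, ‖u z‖ₑ ^ p ∂π
  have hHG' := ENNReal.toReal_mono hGtop hHG
  rw [ENNReal.toReal_mul, ← ENNReal.toReal_rpow, ENNReal.toReal_ofNat] at hHG'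
  have hθ : 0 ≤ q * (2 - p) / p :=
    div_nonneg (mul_nonneg hq0.le (by linarith)) hp0.le
  have hosc' : ∫⁻ z, ∫⁻ w, ‖u z - u w‖ₑ ^ q ∂π ∂π
      ≤ 8 * (ENNReal.ofReal (pwMeanConst (p - 1)) ^ q * 2 ^ n
          * (ENNReal.ofReal (2 * ρ) ^ q * 2 ^ n * H))
        + 8 * (ENNReal.ofReal (1 / (p - 1)) ^ q
          * (2 ^ n * ENNReal.ofReal (C₀ / ρ) * ENNReal.ofReal (2 * (μ ^ (p - 2) * ρ ^ p))
            * ((ENNReal.ofReal L + 1) * (2 * H ^ ((p - 1) / q)))) ^ q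
          * (2 ^ n * U) ^ (q * (2 - p) / p)) := by
    refine hosc.trans ?_
    gcongr
  have hpq : 0 ≤ (p - 1) / q := div_nonneg (by linarith) hq0.le
  have hfin₁ : 8 * (ENNReal.ofReal (pwMeanConst (p - 1)) ^ q * 2 ^ n
      * (ENNReal.ofReal (2 * ρ) ^ q * 2 ^ n * H)) ≠ ∞ := by finiteness
  have hfin₂ : 8 * (ENNReal.ofReal (1 / (p - 1)) ^ q
      * (2 ^ n * ENNReal.ofReal (C₀ / ρ) * ENNReal.ofReal (2 * (μ ^ (p - 2) * ρ ^ p))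
        * ((ENNReal.ofReal L + 1) * (2 * H ^ ((p - 1) / q)))) ^ q
      * (2 ^ n * U) ^ (q * (2 - p) / p)) ≠ ∞ := by finiteness
  have hfin := ENNReal.add_ne_top.2 ⟨hfin₁, hfin₂⟩
  calc ∫ z, ‖u z - ∫ w, u w ∂π‖ ^ q ∂π
      ≤ (∫⁻ z, ∫⁻ w, ‖u z - u w‖ₑ ^ q ∂π ∂π).toReal :=
        integral_norm_sub_integral_rpow_le h.measu ((hmem h.memLp_u).integrable hp1) hq
          (ne_top_of_le_ne_top hfin hosc')
    _ ≤ _ := ENNReal.toReal_mono hfin hosc'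
    _ = 8 * (pwMeanConst (p - 1) ^ q * 2 ^ n * ((2 * ρ) ^ q * 2 ^ n * H.toReal))
      + 8 * ((1 / (p - 1)) ^ q * (2 ^ n * (C₀ / ρ) * (2 * (μ ^ (p - 2) * ρ ^ p))
        * ((L + 1) * (2 * H.toReal ^ ((p - 1) / q)))) ^ q
          * (2 ^ n * U.toReal) ^ (q * (2 - p) / p)) := by
        rw [ENNReal.toReal_add hfin₁ hfin₂]
        simp only [ENNReal.toReal_mul, ← ENNReal.toReal_rpow, ENNReal.toReal_pow,
          ENNReal.toReal_ofNat, ENNReal.toReal_add ENNReal.ofReal_ne_top ENNReal.one_ne_top,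
          ENNReal.toReal_one, ENNReal.toReal_ofReal hL,
          ENNReal.toReal_ofReal (zero_le_one.trans hM),
          ENNReal.toReal_ofReal (zero_le_one.trans hβ),
          ENNReal.toReal_ofReal (div_nonneg hC₀ hρ.le),
          ENNReal.toReal_ofReal (mul_nonneg zero_le_two hρ.le),
          ENNReal.toReal_ofReal (mul_nonneg zero_le_two hr.le)]
    _ ≤ _ := oscillation_le_of_subIntrinsic hp hp2 hq hqp (one_le_pow₀ one_le_two) hM hβ hC₀ hL
        hρ hμ hK ENNReal.toReal_nonneg ENNReal.toReal_nonneg ENNReal.toReal_nonneg hHG'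
        (hsub.trans_eq (by ring))
    _ = _ := by ring
end
end
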